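/- Fix i = 1 or i = 2. If x ∈ G(𝒜) satisfies x^{p_i} = e but x ≠ e, then there exist g ∈ G(𝒜) and an integer n with p_i ∤ n such that x = g f_i^n g⁻¹. -/

import Mathlib

/-!
Common setup: an `L`-structure `𝒜` for a language whose symbols are enumerated
(`m`-th symbol, `m ≥ 1`, each a function or relation symbol of arity ≥ 1), and the
presented group `G(𝒜)` of Harrison-Trainor and Ho.
-/

/-- A first-order language with symbols enumerated by `ℕ` (the `m`-th symbol, for `m ≥ 1`,
is a function symbol if `isFunc m`, and a relation symbol otherwise, of arity `arity m ≥ 1`),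
together with an interpretation on a domain `A`: `funcInterp m` interprets the `m`-th symbol
when it is a function symbol, and `relInterp m` when it is a relation symbol. -/
structure IndexedStructure where
  A : Type
  arity : ℕ → ℕ
  arity_pos : ∀ m, 1 ≤ m → 1 ≤ arity m
  isFunc : ℕ → Prop
  funcInterp : ∀ m, (Fin (arity m) → A) → A
  relInterp : ∀ m, (Fin (arity m) → A) → Prop

/-- The generating set of `G(𝒜)`: one generator for each element of the domain `A`,
plus five further generators `b`, `c`, `d`, `f₁`, `f₂`. -/
inductive GenSym (A : Type) : Type
  | elt : A → GenSym A
  | b : GenSym A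
  | c : GenSym A
  | d : GenSym A
  | f1 : GenSym A
  | f2 : GenSym A

/-- `chainProd lo x y = x y^{(lo+1)²} x y^{(lo+2)²} ⋯ x y^{(lo+1000)²}`.
So `u_A = chainProd 0`, `u_b = chainProd 1000`, `u_c = chainProd 2000`,
`u_d = chainProd 3000`, and `v = chainProd 4000`. -/
def chainProd {G : Type*} [Group G] (lo : ℕ) (x y : G) : G :=
  ((List.range 1000).map fun k => x * y ^ ((lo + k + 1) ^ 2)).prod

/-- `wProd m xs y = x₁⋯xₙ y^{100m+1} x₁⋯xₙ y^{100m+2} ⋯ x₁⋯xₙ y^{100m+100}`,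
i.e. the word `w_m(x₁,…,xₙ,y)`. -/
def wProd {G : Type*} [Group G] (m : ℕ) {n : ℕ} (xs : Fin n → G) (y : G) : G :=
  ((List.range 100).map fun k => (List.ofFn xs).prod * y ^ (100 * m + k + 1)).prod

/-- The set of relators of the presentation of `G(𝒜)`. -/
def grpRels (S : IndexedStructure) (p₁ p₂ : ℕ) : Set (FreeGroup (GenSym S.A)) :=
  {FreeGroup.of GenSym.f1 ^ p₁, FreeGroup.of GenSym.f2 ^ p₂,
    chainProd 4000 (FreeGroup.of GenSym.f1) (FreeGroup.of GenSym.f2),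
    chainProd 4000 (FreeGroup.of GenSym.f2) (FreeGroup.of GenSym.f1),
    chainProd 1000 (FreeGroup.of GenSym.b) (FreeGroup.of GenSym.f1),
    chainProd 1000 (FreeGroup.of GenSym.b) (FreeGroup.of GenSym.f2),
    chainProd 2000 (FreeGroup.of GenSym.c) (FreeGroup.of GenSym.f1),
    chainProd 2000 (FreeGroup.of GenSym.c) (FreeGroup.of GenSym.f2),
    chainProd 3000 (FreeGroup.of GenSym.d) (FreeGroup.of GenSym.f1),
    chainProd 3000 (FreeGroup.of GenSym.d) (FreeGroup.of GenSym.f2)}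
  ∪ {r | ∃ a : S.A,
      r = chainProd 0 (FreeGroup.of (GenSym.elt a)) (FreeGroup.of GenSym.c) ∨
      r = chainProd 0 (FreeGroup.of (GenSym.elt a)) (FreeGroup.of GenSym.d)}
  ∪ {r | ∃ m, 1 ≤ m ∧ S.isFunc m ∧ ∃ as : Fin (S.arity m) → S.A,
      r = wProd m (fun i => FreeGroup.of (GenSym.elt (as i))) (FreeGroup.of GenSym.b) *
        (FreeGroup.of (GenSym.elt (S.funcInterp m as)))⁻¹}
  ∪ {r | ∃ m, 1 ≤ m ∧ ¬ S.isFunc m ∧ ∃ as : Fin (S.arity m) → S.A,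
      S.relInterp m as ∧
      r = wProd m (fun i => FreeGroup.of (GenSym.elt (as i))) (FreeGroup.of GenSym.b)}

/-- The group `G(𝒜)`, presented on the generators `GenSym A` with relators `grpRels`. -/
abbrev GA (S : IndexedStructure) (p₁ p₂ : ℕ) : Type :=
  PresentedGroup (grpRels S p₁ p₂)

/-- The image in `G(𝒜)` of a generator. -/
def gen (S : IndexedStructure) (p₁ p₂ : ℕ) (g : GenSym S.A) : GA S p₁ p₂ :=
  PresentedGroup.of g

/-!
After cyclic reduction, the relators of `G(𝒜)` satisfy `C'(1/8)`: an eighth of a relator contains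
a long power of `f₁` or `f₂`, or a block `X yᵉ` together with its neighbouring letters, which
determines the relator and the position in it. Hence a nonempty reduced word that is trivial in
`G(𝒜)` contains five eighths of a relator, and replacing them by the inverse of the rest decreases
the area.

If `x ≠ e` has finite order, this applies to a power of a shortest word `w` that represents a
conjugate of `x`. As `w` is shortest, these five eighths are longer than `w`, and `w` makes up at
most half of the relator, so they overlap their own shift by `w` in at least an eighth of it. The
relator is therefore of the form `w b = b w`, that is, a proper power. The blocks of all other
relators being pairwise distinct, it must be a power of some `fⱼ`, and so is `w`. As `p₁` and `p₂`
are coprime, `x` has order dividing `pᵢ` only for `j = i`.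
-/

namespace SmallCancellation

open FreeGroup Pointwise

/-! ### Area -/

section Area

variable {G : Type*} [Group G] {s : Set G}

/-- The area of `g` over a set `s` of relators: the least number of factors in an expression of `g`
as a product of conjugates of elements of `s` and of their inverses, and `⊤` if there is none. -/
noncomputable def area (s : Set G) (g : G) : ℕ∞ :=
  ⨅ l : {l : List G // (∀ y ∈ l, y ∈ Group.conjugatesOfSet (s ∪ s⁻¹)) ∧ l.prod = g},
    (l.1.length : ℕ∞)

lemma area_prod_le {l : List G} (hl : ∀ y ∈ l, y ∈ Group.conjugatesOfSet (s ∪ s⁻¹)) :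
    area s l.prod ≤ l.length :=
  iInf_le (fun l' : {l' : List G // (∀ y ∈ l', y ∈ Group.conjugatesOfSet (s ∪ s⁻¹)) ∧
    l'.prod = l.prod} ↦ (l'.1.length : ℕ∞)) ⟨l, hl, rfl⟩

lemma exists_list_length_eq_area {g : G} (hg : area s g ≠ ⊤) :
    ∃ l : List G, (∀ y ∈ l, y ∈ Group.conjugatesOfSet (s ∪ s⁻¹)) ∧ l.prod = g ∧
      l.length = area s g := by
  have : Nonempty {l : List G // (∀ y ∈ l, y ∈ Group.conjugatesOfSet (s ∪ s⁻¹)) ∧ l.prod = g} := by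
    by_contra h
    rw [not_nonempty_iff] at h
    exact hg (by rw [area, iInf_of_empty])
  obtain ⟨⟨l, hl, hlg⟩, hlen⟩ := ciInf_mem fun l : {l : List G //
    (∀ y ∈ l, y ∈ Group.conjugatesOfSet (s ∪ s⁻¹)) ∧ l.prod = g} ↦ (l.1.length : ℕ∞)
  exact ⟨l, hl, hlg, hlen⟩

lemma area_mul_mul_le {P Q r : G} (hr : r ∈ s ∪ s⁻¹) :
    area s (P * r * Q) ≤ area s (P * Q) + 1 := by
  by_cases htop : area s (P * Q) = ⊤
  · simp [htop]
  · obtain ⟨l, hl, hprod, hlen⟩ := exists_list_length_eq_area htop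
    have hconj : P * r * P⁻¹ ∈ Group.conjugatesOfSet (s ∪ s⁻¹) :=
      Group.mem_conjugatesOfSet_iff.2 ⟨r, hr, isConj_iff.2 ⟨P, rfl⟩⟩
    have hle := area_prod_le (List.forall_mem_cons.2 ⟨hconj, hl⟩)
    rw [List.prod_cons, hprod, List.length_cons, Nat.cast_add_one, hlen] at hle
    simpa [mul_assoc] using hle

lemma exists_area_mul_lt {g : G} (htop : area s g ≠ ⊤) (hg : g ≠ 1) :
    ∃ P Q, ∃ r ∈ s ∪ s⁻¹, P * Q = g ∧ area s (P * r * Q) < area s g := by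
  obtain ⟨l, hl, rfl, hlen⟩ := exists_list_length_eq_area htop
  cases l with
  | nil => simp at hg
  | cons y l =>
    obtain ⟨hy, htail⟩ := List.forall_mem_cons.1 hl
    obtain ⟨r, hr, hconj⟩ := Group.mem_conjugatesOfSet_iff.1 hy
    obtain ⟨c, rfl⟩ := isConj_iff.1 hconj
    have hr' : r⁻¹ ∈ s ∪ s⁻¹ := by simpa [or_comm] using hr
    refine ⟨c, r * c⁻¹ * l.prod, r⁻¹, hr', by simp [mul_assoc], ?_⟩
    calc area s (c * r⁻¹ * (r * c⁻¹ * l.prod)) = area s l.prod := by simp [mul_assoc]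
      _ ≤ l.length := area_prod_le htail
      _ < (c * r * c⁻¹ :: l).length := by exact_mod_cast l.length.lt_succ_self
      _ = _ := hlen

lemma area_ne_top {g : G} (hg : g ∈ Subgroup.normalClosure s) : area s g ≠ ⊤ := by
  have key (y : G) (hy : y ∈ s ∪ s⁻¹) (g c : G) (hg : area s g ≠ ⊤) :
      area s (c * y * c⁻¹ * g) ≠ ⊤ := by
    rw [mul_assoc]
    exact ne_top_of_le_ne_top (by simpa using hg) (area_mul_mul_le hy)
  have hone : area s (1 : G) ≠ ⊤ := by
    simpa using ne_top_of_le_ne_top ENat.zero_ne_top (area_prod_le (s := s) (l := []) (by simp))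
  induction hg using Subgroup.closure_induction_left with
  | one => exact hone
  | mul_left x hx y _ ih =>
    obtain ⟨r, hr, hconj⟩ := Group.mem_conjugatesOfSet_iff.1 hx
    obtain ⟨c, rfl⟩ := isConj_iff.1 hconj
    exact key r (.inl hr) _ _ ih
  | inv_mul_cancel x hx y _ ih =>
    obtain ⟨r, hr, hconj⟩ := Group.mem_conjugatesOfSet_iff.1 hx
    obtain ⟨c, rfl⟩ := isConj_iff.1 hconj
    simpa [mul_assoc] using key r⁻¹ (.inr (by simpa using hr)) _ c ih

end Area

/-! ### Small cancellation -/

section WordProblem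

variable {α : Type*} {R : Set (List (α × Bool))}

/-- `R` is a set of nonempty reduced words, closed under cyclic permutations and inverses, that
satisfies the small cancellation condition `C'(1/8)`: a common prefix of two different words in `R`
is shorter than an eighth of either. -/
structure IsSmallCancellation (R : Set (List (α × Bool))) : Prop where
  isReduced : ∀ r ∈ R, IsReduced r
  ne_nil : ∀ r ∈ R, r ≠ []
  rotate_mem : ∀ a b, a ++ b ∈ R → b ++ a ∈ R
  invRev_mem : ∀ r ∈ R, invRev r ∈ R
  eq_of_piece : ∀ p q q', p ++ q ∈ R → p ++ q' ∈ R → (p ++ q).length ≤ 8 * p.length → q = q'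

/-- The area over `R` of the element of the free group that the word `w` represents. -/
noncomputable def wordArea (R : Set (List (α × Bool))) (w : List (α × Bool)) : ℕ∞ :=
  area (mk '' R) (mk w)

lemma wordArea_congr {w w' : List (α × Bool)} (h : mk w = mk w') :
    wordArea R w = wordArea R w' := by
  rw [wordArea, h, wordArea]

lemma wordArea_append_le {x u v y : List (α × Bool)} (huv : u ++ v ∈ R) :
    wordArea R (x ++ u ++ y) ≤ wordArea R (x ++ invRev v ++ y) + 1 := by
  have hle := area_mul_mul_le (P := mk x) (Q := mk (invRev v ++ y))
    (.inl (Set.mem_image_of_mem mk huv))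
  unfold wordArea
  convert hle using 2
  · simp only [← mul_mk, ← inv_mk]; group
  · simp only [← mul_mk, mul_assoc]

lemma le_wordArea_of_lt {x u v y : List (α × Bool)} {n : ℕ∞} (huv : u ++ v ∈ R)
    (h : n < wordArea R (x ++ u ++ y)) : n ≤ wordArea R (x ++ invRev v ++ y) :=
  Order.le_of_lt_add_one (h.trans_le (wordArea_append_le huv))

lemma eq_of_mk_eq_mk {w w' : List (α × Bool)} (hw : IsReduced w) (hw' : IsReduced w')
    (h : mk w = mk w') : w = w' := by
  classical
  rw [← hw.reduce_eq, ← hw'.reduce_eq, reduce.sound h]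

lemma isReduced_invRev {w : List (α × Bool)} (hw : IsReduced w) : IsReduced (invRev w) := by
  classical
  rw [isReduced_iff_reduce_eq, reduce_invRev, hw.reduce_eq]

lemma isReduced_append_invRev {x v : List (α × Bool)} (hx : IsReduced x) (hv : IsReduced v)
    (h : ∀ c, [c] <:+ x → ¬ [c] <:+ v) : IsReduced (x ++ invRev v) := by
  refine List.isChain_append.2 ⟨hx, isReduced_invRev hv, fun c hc d hd hcd ↦ ?_⟩
  obtain ⟨x, rfl⟩ := List.getLast?_eq_some_iff.1 hc
  simp only [invRev, List.head?_reverse, List.getLast?_map, Option.mem_map] at hd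
  obtain ⟨c', hc', rfl⟩ := hd
  obtain ⟨v, rfl⟩ := List.getLast?_eq_some_iff.1 hc'
  have hne : c ≠ c' := fun hcc' ↦ h c (List.suffix_append ..) (hcc' ▸ List.suffix_append ..)
  exact Bool.ne_not.1 fun h2 ↦ hne (Prod.ext hcd (by simpa using h2))

lemma isReduced_invRev_append {v y : List (α × Bool)} (hv : IsReduced v) (hy : IsReduced y)
    (h : ∀ c, [c] <+: v → ¬ [c] <+: y) : IsReduced (invRev v ++ y) := by
  refine List.isChain_append.2 ⟨isReduced_invRev hv, hy, fun d hd c hc hcd ↦ ?_⟩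
  obtain ⟨y, rfl⟩ := List.head?_eq_some_iff.1 hc
  simp only [invRev, List.getLast?_reverse, List.head?_map, Option.mem_map] at hd
  obtain ⟨c', hc', rfl⟩ := hd
  obtain ⟨v, rfl⟩ := List.head?_eq_some_iff.1 hc'
  have hne : c' ≠ c := fun hcc' ↦ h c' ⟨v, rfl⟩ ⟨y, by rw [hcc']; rfl⟩
  exact (Bool.ne_not.1 fun h2 ↦ hne (Prod.ext hcd (by simpa using h2.symm))).symm

lemma IsSmallCancellation.eq_of_piece_right (hR : IsSmallCancellation R)
    {p q q' : List (α × Bool)} (hq : p ++ q ∈ R) (hq' : p ++ q' ∈ R)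
    (h : (p ++ q').length ≤ 8 * p.length) : q = q' :=
  (hR.eq_of_piece p q' q hq' hq h).symm

lemma exists_maximal_overlap (hR : IsSmallCancellation R) {x u y v : List (α × Bool)}
    (hx : IsReduced x) (hy : IsReduced y) (huv : u ++ v ∈ R) :
    ∃ x' a b y' v', x = x' ++ a ∧ y = b ++ y' ∧ a ++ u ++ b ++ v' ∈ R ∧
      (a ++ u ++ b ++ v').length = (u ++ v).length ∧
      mk (x' ++ invRev v' ++ y') = mk (x ++ invRev v ++ y) ∧
      (v' = [] ∨ IsReduced (x' ++ invRev v' ++ y')) := by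
  induction hn : v.length generalizing x u y v with
  | zero =>
    obtain rfl := List.length_eq_zero_iff.1 hn
    exact ⟨x, [], [], y, [], by simpa using huv⟩
  | succ n ih =>
    have hv : IsReduced v := (hR.isReduced _ huv).infix List.infix_append_right
    have hv' : v ≠ [] := by rintro rfl; simp at hn
    by_cases hxv : ∃ c, [c] <:+ x ∧ [c] <:+ v
    · obtain ⟨c, ⟨x, rfl⟩, ⟨v, rfl⟩⟩ := hxv
      have hcuv : [c] ++ u ++ v ∈ R := by
        simpa using hR.rotate_mem (u ++ v) [c] (by simpa using huv)
      obtain ⟨x', a, b, y', v', rfl, rfl, hrel, hlen, hmk, hred⟩ :=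
        ih (hx.infix List.infix_append_left) hy hcuv (by simpa using hn)
      refine ⟨x', a ++ [c], b, y', v', by simp, rfl, by simpa using hrel, ?_, ?_, hred⟩
      · simp only [List.length_append] at hlen ⊢; lia
      · rw [hmk]; simp only [← mul_mk, ← inv_mk]; group
    by_cases hvy : ∃ c, [c] <+: v ∧ [c] <+: y
    · obtain ⟨c, ⟨v, rfl⟩, ⟨y, rfl⟩⟩ := hvy
      obtain ⟨x', a, b, y', v', rfl, rfl, hrel, hlen, hmk, hred⟩ :=
        ih (u := u ++ [c]) hx (hy.infix List.infix_append_right) (by simpa using huv)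
          (by simpa using hn)
      refine ⟨x', a, [c] ++ b, y', v', rfl, by simp, by simpa using hrel, ?_, ?_, hred⟩
      · simp only [List.length_append] at hlen ⊢; lia
      · rw [hmk]; simp only [← mul_mk, ← inv_mk]; group
    · push Not at hxv hvy
      refine ⟨x, [], [], y, v, by simp, rfl, by simpa using huv, by simp, rfl, .inr ?_⟩
      refine IsReduced.append_overlap (isReduced_append_invRev hx hv hxv)
        (isReduced_invRev_append hv hy hvy) ?_
      exact fun h ↦ hv' (invRev_injective h)

/-! ### Dehn reductions -/

/-- The reduced word `x ++ u ++ y` can be shortened by a *Dehn reduction* at `u`: here `u` makes up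
at least five eighths of a relator `u ++ v`, and replacing `u` by the inverse of `v` decreases the
area. -/
structure IsDehnReduction (R : Set (List (α × Bool))) (x u v y : List (α × Bool)) : Prop where
  mem : u ++ v ∈ R
  length_le : 5 * (u ++ v).length ≤ 8 * u.length
  wordArea_lt : wordArea R (x ++ invRev v ++ y) < wordArea R (x ++ u ++ y)

/-- A state in the sequence of Dehn reductions of a word of minimal area: `V` is what the last
reduction has inserted, `s` the complementary part of its relator, `T` the part of the earlier
insertions that has survived, and `X` and `y` are what is left of the original word. No other
reduction of the word at `V`, inside `T ++ V` or inside `y`, and no insertion of a relator inside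
`X`, decreases the area. -/
structure IsReductionState (R : Set (List (α × Bool))) (X T V s y : List (α × Bool)) : Prop where
  isReduced : IsReduced (X ++ T ++ V ++ y)
  mem : V ++ s ∈ R
  length_le : (V ++ s).length ≤ 4 * V.length
  ne_top : wordArea R (X ++ T ++ V ++ y) ≠ ⊤
  lt_complement : wordArea R (X ++ T ++ V ++ y) < wordArea R (X ++ T ++ invRev s ++ y)
  le_insert : ∀ X₁ X₂, X = X₁ ++ X₂ → X₂ ≠ [] → ∀ r ∈ R,
    wordArea R (X ++ T ++ V ++ y) ≤ wordArea R (X₁ ++ r ++ X₂ ++ T ++ V ++ y)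
  le_right : ∀ y₁ u y₂ v, y = y₁ ++ u ++ y₂ → u ++ v ∈ R → 5 * (u ++ v).length ≤ 8 * u.length →
    wordArea R (X ++ T ++ V ++ y) ≤ wordArea R (X ++ T ++ V ++ y₁ ++ invRev v ++ y₂)
  le_middle : ∀ t₁ p t₂ q, T ++ V = t₁ ++ p ++ t₂ → p ++ q ∈ R →
    (p ++ q).length ≤ 4 * p.length →
    wordArea R (X ++ T ++ V ++ y) ≤ wordArea R (X ++ t₁ ++ invRev q ++ t₂ ++ y)

lemma IsDehnReduction.exists_maximal (hR : IsSmallCancellation R) {x u v y : List (α × Bool)}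
    (hred : IsReduced (x ++ u ++ y)) (h : IsDehnReduction R x u v y) :
    ∃ x' u' v' y', x' ++ u' ++ y' = x ++ u ++ y ∧ IsDehnReduction R x' u' v' y' ∧
      (v' = [] ∨ IsReduced (x' ++ invRev v' ++ y')) := by
  obtain ⟨x', a, b, y', v', rfl, rfl, hrel, hlen, hmk, hv'⟩ :=
    exists_maximal_overlap (x := x) (y := y) hR (hred.infix ⟨[], u ++ y, by simp⟩)
      (hred.infix List.infix_append_right) h.mem
  refine ⟨x', a ++ u ++ b, v', y', by simp, ⟨hrel, ?_, ?_⟩, hv'⟩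
  · have := h.length_le
    rw [hlen]
    simp only [List.length_append] at this ⊢
    lia
  · rw [wordArea_congr hmk]
    simpa using h.wordArea_lt

namespace IsReductionState

section Overlap

variable {X T V s y x u v z : List (α × Bool)}

lemma ne_nil (hR : IsSmallCancellation R) (h : IsReductionState R X T V s y) : V ≠ [] := by
  rintro rfl
  have hs : s = [] := by simpa using h.length_le
  exact hR.ne_nil _ h.mem hs

lemma exists_overlap (hR : IsSmallCancellation R) (h : IsReductionState R X T V s y)
    (hw : x ++ u ++ z = X ++ T ++ V ++ y) (hd : IsDehnReduction R x u v z) :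
    ∃ V₁ t q, V = V₁ ++ t ∧ u = t ++ q ∧ y = q ++ z ∧ x = X ++ T ++ V₁ := by
  have hlt := hd.wordArea_lt
  rw [hw] at hlt
  obtain ⟨x₁, rfl, hx₁⟩ : ∃ x₁, x = X ++ x₁ ∧ T ++ V ++ y = x₁ ++ (u ++ z) := by
    rcases List.append_eq_append_iff.1
        (show X ++ (T ++ V ++ y) = x ++ (u ++ z) by simpa using hw.symm) with h' | ⟨X₂, hX, hX₂⟩
    · exact h'
    rcases eq_or_ne X₂ [] with rfl | hne
    · exact ⟨[], by simpa using hX.symm, by simpa using hX₂.symm⟩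
    · refine absurd (h.le_insert _ _ hX hne _ (hR.invRev_mem _ hd.mem)) (not_le_of_gt ?_)
      refine (wordArea_congr ?_).trans_lt hlt
      rw [show x ++ invRev (u ++ v) ++ X₂ ++ T ++ V ++ y =
        x ++ invRev (u ++ v) ++ (X₂ ++ (T ++ V ++ y)) by simp, ← hX₂]
      simp only [← mul_mk, ← inv_mk]; group
  obtain ⟨t, hTV, ht⟩ : ∃ t, T ++ V = x₁ ++ t ∧ u ++ z = t ++ y := by
    rcases List.append_eq_append_iff.1 hx₁ with ⟨y₁, rfl, hy⟩ | h'
    · exact absurd (h.le_right y₁ u z v (by simpa using hy) hd.mem hd.length_le)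
        (not_le_of_gt (by simpa using hlt))
    · exact h'
  obtain ⟨q, rfl, rfl⟩ : ∃ q, u = t ++ q ∧ y = q ++ z := by
    rcases List.append_eq_append_iff.1 ht with ⟨t₂, rfl, rfl⟩ | h'
    · have hlen : (u ++ v).length ≤ 4 * u.length := by have := hd.length_le; lia
      exact absurd (h.le_middle x₁ u t₂ v (by simpa using hTV) hd.mem hlen)
        (not_le_of_gt (by simpa using hlt))
    · exact h'
  rcases List.append_eq_append_iff.1 hTV with ⟨V₁, rfl, rfl⟩ | ⟨c, rfl, rfl⟩
  · exact ⟨V₁, t, q, rfl, rfl, rfl, by simp⟩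
  · have hs : s = q ++ v ++ c := by
      refine hR.eq_of_piece V _ _ h.mem ?_ (by have := h.length_le; lia)
      simpa using hR.rotate_mem c (V ++ q ++ v) (by simpa using hd.mem)
    refine absurd hlt (not_lt_of_ge (h.lt_complement.le.trans_eq (wordArea_congr ?_)))
    rw [hs]
    simp only [← mul_mk, ← inv_mk]; group

lemma length_overlap_lt {V₁ t q : List (α × Bool)} (hR : IsSmallCancellation R)
    (h : IsReductionState R X T (V₁ ++ t) s (q ++ z))
    (hd : IsDehnReduction R (X ++ T ++ V₁) (t ++ q) v z) :
    8 * t.length < (V₁ ++ t ++ s).length ∧ 8 * t.length < (t ++ q ++ v).length ∧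
      8 * q.length < 5 * (t ++ q ++ v).length := by
  have hlt : wordArea R (X ++ T ++ V₁ ++ invRev v ++ z) <
      wordArea R (X ++ T ++ (V₁ ++ t) ++ (q ++ z)) := by simpa using hd.wordArea_lt
  have hts : t ++ (s ++ V₁) ∈ R := by simpa using hR.rotate_mem V₁ (t ++ s) (by simpa using h.mem)
  have htv : t ++ (q ++ v) ∈ R := by simpa using hd.mem
  have hne : s ++ V₁ ≠ q ++ v := by
    intro he
    refine absurd hlt (not_lt_of_ge (h.lt_complement.le.trans_eq (wordArea_congr ?_)))
    have he' := congrArg FreeGroup.mk he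
    simp only [← mul_mk, ← inv_mk] at he' ⊢
    rw [eq_mul_inv_of_mul_eq he']
    group
  refine ⟨?_, ?_, ?_⟩ <;> by_contra! hc
  · exact hne (hR.eq_of_piece t _ _ hts htv (by simp only [List.length_append] at hc ⊢; lia))
  · exact hne (hR.eq_of_piece_right hts htv (by simpa using hc))
  · refine absurd (h.le_right [] q z (v ++ t) rfl ?_ ?_) (not_le_of_gt ?_)
    · simpa using hR.rotate_mem t (q ++ v) htv
    · simp only [List.length_append] at hc ⊢; lia
    · refine (wordArea_congr ?_).trans_lt hlt
      simp only [List.append_nil, ← mul_mk, ← inv_mk]; group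

end Overlap

section Next

variable {X T V₁ t s q z v : List (α × Bool)}

lemma le_middle_of_straddle (hR : IsSmallCancellation R)
    (h : IsReductionState R X T (V₁ ++ t) s (q ++ z))
    (hd : IsDehnReduction R (X ++ T ++ V₁) (t ++ q) v z)
    (hV₁ : (V₁ ++ t ++ s).length ≤ 8 * V₁.length) {t₁ p₁ p₂ t₂ q' : List (α × Bool)}
    (hTV : T ++ V₁ = t₁ ++ p₁) (hv : invRev v = p₂ ++ t₂) (hp : p₁ ++ p₂ ++ q' ∈ R)
    (hlen : (p₁ ++ p₂ ++ q').length ≤ 8 * p₁.length) :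
    wordArea R (X ++ T ++ V₁ ++ invRev v ++ z) ≤
      wordArea R (X ++ t₁ ++ invRev q' ++ t₂ ++ z) := by
  -- The two relators agree along the shorter of `p₁` and `V₁`, hence coincide.
  obtain ⟨g, hg₁, hg₂⟩ : ∃ g, FreeGroup.mk t₁ = FreeGroup.mk T * g ∧
      FreeGroup.mk p₂ * FreeGroup.mk q' = FreeGroup.mk t * FreeGroup.mk s * g := by
    rcases List.append_eq_append_iff.1 hTV with ⟨c, rfl, rfl⟩ | ⟨c, rfl, rfl⟩
    · refine ⟨FreeGroup.mk c, mul_mk.symm, ?_⟩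
      have hpc : p₁ ++ (t ++ s ++ c) ∈ R := by
        simpa using hR.rotate_mem c (p₁ ++ t ++ s) (by simpa using h.mem)
      simp only [mul_mk,
        hR.eq_of_piece p₁ (p₂ ++ q') _ (by simpa using hp) hpc (by simpa using hlen)]
    · refine ⟨(FreeGroup.mk c)⁻¹, by rw [← mul_mk, mul_inv_cancel_right], eq_mul_inv_of_mul_eq ?_⟩
      have hpc : V₁ ++ (p₂ ++ q' ++ c) ∈ R := by
        simpa using hR.rotate_mem c (V₁ ++ p₂ ++ q') (by simpa using hp)
      simp only [mul_mk,
        hR.eq_of_piece_right (p := V₁) hpc (by simpa using h.mem) (by simpa using hV₁)]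
  have hlt : wordArea R (X ++ T ++ V₁ ++ invRev v ++ z) <
      wordArea R (X ++ T ++ invRev s ++ invRev t ++ (t ++ q) ++ z) :=
    calc _ < wordArea R (X ++ T ++ (V₁ ++ t) ++ (q ++ z)) := by simpa using hd.wordArea_lt
      _ < wordArea R (X ++ T ++ invRev s ++ (q ++ z)) := h.lt_complement
      _ = _ := wordArea_congr (by simp only [← mul_mk, ← inv_mk]; group)
  refine (le_wordArea_of_lt hd.mem hlt).trans_eq (wordArea_congr ?_)
  have hq' := (inv_mul_eq_of_eq_mul hg₂).symm
  rw [hv]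
  simp only [← mul_mk, ← inv_mk, hq', hg₁]
  group

lemma le_middle_next (hR : IsSmallCancellation R)
    (h : IsReductionState R X T (V₁ ++ t) s (q ++ z))
    (hd : IsDehnReduction R (X ++ T ++ V₁) (t ++ q) v z)
    (hV₁ : (V₁ ++ t ++ s).length ≤ 8 * V₁.length)
    {t₁ p t₂ q' : List (α × Bool)}
    (hTV : T ++ V₁ ++ invRev v = t₁ ++ p ++ t₂) (hp : p ++ q' ∈ R)
    (hlen : (p ++ q').length ≤ 4 * p.length) :
    wordArea R (X ++ T ++ V₁ ++ invRev v ++ z) ≤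
      wordArea R (X ++ t₁ ++ invRev q' ++ t₂ ++ z) := by
  have hlt : wordArea R (X ++ T ++ V₁ ++ invRev v ++ z) <
      wordArea R (X ++ T ++ (V₁ ++ t) ++ (q ++ z)) := by simpa using hd.wordArea_lt
  have hv : invRev v ++ invRev (t ++ q) ∈ R := by
    simpa [invRev_append] using hR.invRev_mem _ hd.mem
  rw [List.append_assoc t₁] at hTV
  rcases List.append_eq_append_iff.1 hTV with ⟨c, rfl, hc⟩ | ⟨p', hTV₁, h'⟩
  · have hq' : q' = t₂ ++ invRev (t ++ q) ++ c := by
      refine hR.eq_of_piece p _ _ hp ?_ (by lia)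
      simpa using hR.rotate_mem c (p ++ t₂ ++ invRev (t ++ q)) (by simpa [hc] using hv)
    refine hlt.le.trans_eq (wordArea_congr ?_)
    rw [hq']
    simp only [← mul_mk, ← inv_mk]; group
  rcases List.append_eq_append_iff.1 h' with ⟨c, rfl, rfl⟩ | ⟨p₂, rfl, hv₂⟩
  · have hle := h.le_middle t₁ p (c ++ t) q' (by rw [← List.append_assoc, hTV₁]; simp) hp hlen
    have := le_wordArea_of_lt (x := X ++ t₁ ++ invRev q' ++ c) (y := z) hd.mem
      (by simpa using hlt.trans_le hle)
    simpa using this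
  by_cases hp₂ : (p' ++ p₂ ++ q').length ≤ 8 * p₂.length
  · have hq' : q' ++ p' = t₂ ++ invRev (t ++ q) := by
      refine hR.eq_of_piece p₂ _ _ ?_ (by simpa [hv₂] using hv) ?_
      · simpa using hR.rotate_mem p' (p₂ ++ q') (by simpa using hp)
      · simp only [List.length_append] at hp₂ ⊢; lia
    refine hlt.le.trans_eq (wordArea_congr ?_)
    replace hq' := congrArg FreeGroup.mk hq'
    replace hTV₁ := congrArg FreeGroup.mk hTV₁
    simp only [← mul_mk, ← inv_mk] at hq' hTV₁ ⊢
    rw [eq_mul_inv_of_mul_eq hq', eq_mul_inv_of_mul_eq hTV₁]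
    group
  · refine le_middle_of_straddle hR h hd hV₁ hTV₁ hv₂ hp ?_
    simp only [List.length_append] at hlen hp₂ ⊢; lia

lemma next (hR : IsSmallCancellation R) (h : IsReductionState R X T (V₁ ++ t) s (q ++ z))
    (hd : IsDehnReduction R (X ++ T ++ V₁) (t ++ q) v z)
    (hred : v = [] ∨ IsReduced (X ++ T ++ V₁ ++ invRev v ++ z)) :
    IsReductionState R X (T ++ V₁) (invRev v) (invRev (t ++ q)) z := by
  obtain ⟨ht, ht', hq⟩ := h.length_overlap_lt hR hd
  have hV := h.length_le
  simp only [List.length_append] at ht ht' hq hV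
  have hvne : v ≠ [] := by rintro rfl; simp only [List.length_nil] at *; lia
  have hlt : wordArea R (X ++ T ++ V₁ ++ invRev v ++ z) <
      wordArea R (X ++ T ++ (V₁ ++ t) ++ (q ++ z)) := by simpa using hd.wordArea_lt
  constructor
  · simpa using hred.resolve_left hvne
  · simpa [invRev_append] using hR.invRev_mem _ hd.mem
  · simp only [List.length_append, invRev_length]; lia
  · simpa using ne_top_of_lt hlt
  · simpa [invRev_invRev] using hlt
  · intro X₁ X₂ hX hX₂ r hr
    have hle := h.le_insert X₁ X₂ hX hX₂ r hr
    simpa using le_wordArea_of_lt (x := X₁ ++ r ++ X₂ ++ T ++ V₁) (y := z) hd.mem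
      (by simpa using hlt.trans_le hle)
  · rintro y₁ u' y₂ v' rfl hu' hlen
    have hle := h.le_right (q ++ y₁) u' y₂ v' (by simp) hu' hlen
    simpa using le_wordArea_of_lt (x := X ++ T ++ V₁) (y := y₁ ++ invRev v' ++ y₂) hd.mem
      (by simpa using hlt.trans_le hle)
  · intro t₁ p t₂ q' hTV hp hlen
    simpa using h.le_middle_next hR hd (by simp only [List.length_append]; lia) hTV hp hlen

end Next

lemma false_of_forall_isDehnReduction (hR : IsSmallCancellation R) {X T V s y : List (α × Bool)}
    (h : IsReductionState R X T V s y)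
    (hdehn : ∀ w, IsReduced w → w ≠ [] → wordArea R w ≤ wordArea R (X ++ T ++ V ++ y) →
      ∃ x u v z, x ++ u ++ z = w ∧ IsDehnReduction R x u v z) : False := by
  induction hn : wordArea R (X ++ T ++ V ++ y) using WellFoundedLT.induction
    generalizing T V s y with
  | ind n ih =>
    subst hn
    obtain ⟨x, u, v, z, hw, hd⟩ := hdehn _ h.isReduced (by simp [h.ne_nil hR]) le_rfl
    obtain ⟨x, u, v, z, hw', hd, hv⟩ := hd.exists_maximal hR (hw ▸ h.isReduced)
    obtain ⟨V₁, t, q, rfl, rfl, rfl, rfl⟩ := h.exists_overlap hR (hw'.trans hw) hd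
    have hlt := hd.wordArea_lt
    exact ih _ (by simpa using hlt) (h.next hR hd hv)
      (fun w hw hne hle ↦ hdehn w hw hne (hle.trans (by simpa using hlt.le))) rfl

end IsReductionState

/-- A factorization `X ++ Y` of a word representing the same element as `w`, at which the insertion
of the inverse of a relator decreases the area. -/
structure IsSplit (R : Set (List (α × Bool))) (w X Y : List (α × Bool)) : Prop where
  mk_eq : mk (X ++ Y) = mk w
  exists_lt : ∃ r ∈ R, wordArea R (X ++ invRev r ++ Y) < wordArea R w

/-- A split that minimizes first `|X| + |Y|` and then `|X|`. -/
structure IsMinimalSplit (R : Set (List (α × Bool))) (w X Y : List (α × Bool)) : Prop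
    extends IsSplit R w X Y where
  length_le : ∀ X' Y', IsSplit R w X' Y' → X'.length + Y'.length ≤ X.length + Y.length →
    X.length + Y.length ≤ X'.length + Y'.length ∧ X.length ≤ X'.length

section MinimalSplit

variable {w X Y : List (α × Bool)}

lemma exists_isSplit (hR : IsSmallCancellation R) (htop : wordArea R w ≠ ⊤) (hw : mk w ≠ 1) :
    ∃ X Y, IsSplit R w X Y := by
  classical
  obtain ⟨P, Q, r, hr, hPQ, hlt⟩ := exists_area_mul_lt htop hw
  refine ⟨P.toWord, Q.toWord, by rw [← mul_mk, mk_toWord, mk_toWord, hPQ], ?_⟩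
  rcases hr with ⟨r, hr, rfl⟩ | ⟨r', hr', he⟩
  · exact ⟨invRev r, hR.invRev_mem r hr, by
      simpa [wordArea, ← mul_mk, mk_toWord, invRev_invRev, mul_assoc] using hlt⟩
  · obtain rfl : r = (mk r')⁻¹ := by rw [he, inv_inv]
    exact ⟨r', hr', by simpa only [wordArea, ← mul_mk, mk_toWord, ← inv_mk] using hlt⟩

lemma IsSplit.exists_isMinimalSplit (h : IsSplit R w X Y) : ∃ X Y, IsMinimalSplit R w X Y := by
  obtain ⟨⟨X, Y⟩, hXY, hmin⟩ := exists_minimalFor_of_wellFoundedLT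
    (fun p : List (α × Bool) × List (α × Bool) ↦ IsSplit R w p.1 p.2)
    (fun p ↦ toLex (p.1.length + p.2.length, p.1.length)) ⟨(X, Y), h⟩
  refine ⟨X, Y, hXY, fun X' Y' h' hle ↦ ?_⟩
  have := hmin (j := (X', Y')) h'
  simp only [Prod.Lex.toLex_le_toLex] at this
  lia

lemma length_reduce_lt [DecidableEq α] (hX : ¬ IsReduced X) : (reduce X).length < X.length :=
  lt_of_le_of_ne reduce.red.length_le fun h ↦
    hX (isReduced_iff_reduce_eq.2 (reduce.red.sublist.eq_of_length h))

namespace IsMinimalSplit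

lemma isReduced (h : IsMinimalSplit R w X Y) {X' Y' : List (α × Bool)} (h' : IsSplit R w X' Y')
    (hle : X'.length + Y'.length ≤ X.length + Y.length) : IsReduced X' ∧ IsReduced Y' := by
  classical
  have hred : IsSplit R w (reduce X') (reduce Y') := by
    obtain ⟨hmk, r, hr, hlt⟩ := h'
    refine ⟨by rw [← mul_mk, reduce.self, reduce.self, mul_mk, hmk], r, hr, ?_⟩
    rwa [wordArea_congr (w' := X' ++ invRev r ++ Y') (by simp only [← mul_mk, reduce.self])]
  have hX' : (reduce X').length ≤ X'.length := reduce.red.length_le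
  have hY' : (reduce Y').length ≤ Y'.length := reduce.red.length_le
  have := h.length_le _ _ hred (by lia)
  constructor <;> by_contra hc <;> have := length_reduce_lt hc <;> lia

lemma le_insert (h : IsMinimalSplit R w X Y) (hR : IsSmallCancellation R) {X₁ X₂ : List (α × Bool)}
    (hX : X = X₁ ++ X₂) (hX₂ : X₂ ≠ []) {r : List (α × Bool)} (hr : r ∈ R) :
    wordArea R w ≤ wordArea R (X₁ ++ r ++ X₂ ++ Y) := by
  subst hX
  by_contra! hlt
  have hsplit : IsSplit R w X₁ (X₂ ++ Y) :=
    ⟨by rw [← h.mk_eq, List.append_assoc], invRev r, hR.invRev_mem r hr,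
      by simpa [invRev_invRev] using hlt⟩
  have := (h.length_le _ _ hsplit (by simp [add_assoc])).2
  simp only [List.length_append] at this
  exact hX₂ (List.length_eq_zero_iff.1 (by lia))

lemma le_right (h : IsMinimalSplit R w X Y) (hR : IsSmallCancellation R) (hw : IsReduced w)
    (hno : ∀ x u v z, x ++ u ++ z = w → ¬ IsDehnReduction R x u v z)
    {y₁ u y₂ v : List (α × Bool)} (hY : Y = y₁ ++ u ++ y₂) (huv : u ++ v ∈ R)
    (hlen : 5 * (u ++ v).length ≤ 8 * u.length) :
    wordArea R w ≤ wordArea R (X ++ y₁ ++ invRev v ++ y₂) := by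
  subst hY
  by_contra! hlt
  have hu : u ≠ [] := by
    rintro rfl
    exact hR.ne_nil _ huv (by simpa using hlen)
  have hsplit : IsSplit R w (X ++ (y₁ ++ u)) y₂ := by
    refine ⟨by simpa using h.mk_eq, v ++ u, hR.rotate_mem u v huv, ?_⟩
    refine (wordArea_congr ?_).trans_lt hlt
    simp only [← mul_mk, ← inv_mk]; group
  have hred : IsReduced (X ++ (y₁ ++ u) ++ y₂) :=
    IsReduced.append_overlap (h.isReduced hsplit (by simp [add_assoc])).1
      (by simpa using (h.isReduced h.toIsSplit le_rfl).2) (by simp [hu])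
  obtain rfl : X ++ (y₁ ++ u) ++ y₂ = w :=
    eq_of_mk_eq_mk hred hw (by simpa using h.mk_eq)
  exact hno (X ++ y₁) u v y₂ (by simp) ⟨huv, hlen, by simpa using hlt⟩

lemma exists_overlap (h : IsMinimalSplit R w X Y) (hR : IsSmallCancellation R) :
    ∃ b t Y', Y = b ++ Y' ∧ b ++ t ∈ R ∧ wordArea R (X ++ invRev t ++ Y') < wordArea R w ∧
      (t = [] ∨ IsReduced (X ++ invRev t ++ Y')) := by
  obtain ⟨hmk, r, hr, hlt⟩ := h.toIsSplit
  have hred := h.isReduced h.toIsSplit le_rfl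
  obtain ⟨X', a, b, Y', t, rfl, rfl, hrel, -, hmk', ht⟩ :=
    exists_maximal_overlap (u := []) hR hred.1 hred.2 hr
  rw [← wordArea_congr hmk'] at hlt
  simp only [List.append_nil] at hrel
  obtain rfl : a = [] := by
    have hsplit : IsSplit R w X' (a ++ (b ++ Y')) := by
      refine ⟨by simpa using hmk, a ++ b ++ t, hrel, (wordArea_congr ?_).trans_lt hlt⟩
      simp only [← mul_mk, ← inv_mk]; group
    have := (h.length_le _ _ hsplit (by simp [add_assoc])).2
    simpa using this
  exact ⟨b, t, Y', rfl, hrel, by simpa using hlt, by simpa using ht⟩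

lemma exists_isReductionState (h : IsMinimalSplit R w X Y) (hR : IsSmallCancellation R)
    (hw : IsReduced w) (hno : ∀ x u v z, x ++ u ++ z = w → ¬ IsDehnReduction R x u v z) :
    ∃ V s y, IsReductionState R X [] V s y ∧
      wordArea R (X ++ [] ++ V ++ y) < wordArea R w := by
  obtain ⟨b, t, Y, rfl, hbt, hlt, hred⟩ := h.exists_overlap hR
  have hb : 8 * b.length < 5 * (b ++ t).length := by
    by_contra! hlen
    exact absurd (h.le_right hR hw hno (y₁ := []) rfl hbt hlen) (not_le_of_gt (by simpa using hlt))
  have ht : t ≠ [] := by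
    rintro rfl
    simp only [List.append_nil] at hb
    lia
  have hinv : invRev t ++ invRev b ∈ R := by simpa [invRev_append] using hR.invRev_mem _ hbt
  refine ⟨invRev t, invRev b, Y, ?_, by simpa using hlt⟩
  constructor
  · simpa using hred.resolve_left ht
  · exact hinv
  · simp only [List.length_append, invRev_length] at hb ⊢; lia
  · simpa using ne_top_of_lt hlt
  · simpa [invRev_invRev, wordArea_congr h.mk_eq] using hlt
  · intro X₁ X₂ hX hX₂ r hr
    simpa using le_wordArea_of_lt (x := X₁ ++ r ++ X₂) (y := Y) hbt
      (by simpa using hlt.trans_le (h.le_insert hR hX hX₂ hr))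
  · rintro y₁ u y₂ v rfl huv hlen
    simpa using le_wordArea_of_lt (x := X) (y := y₁ ++ invRev v ++ y₂) hbt
      (by simpa using hlt.trans_le (h.le_right hR hw hno (y₁ := b ++ y₁) (by simp) huv hlen))
  · intro t₁ p t₂ q ht hpq hlen
    have hq : q = t₂ ++ invRev b ++ t₁ := by
      refine hR.eq_of_piece p _ _ hpq ?_ (by lia)
      rw [List.nil_append] at ht
      simpa using hR.rotate_mem t₁ (p ++ t₂ ++ invRev b) (by simpa [ht] using hinv)
    have hle : wordArea R (X ++ invRev t ++ Y) ≤ wordArea R (X ++ t₁ ++ invRev q ++ t₂ ++ Y) := by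
      refine hlt.le.trans_eq ?_
      rw [← wordArea_congr h.mk_eq, hq]
      apply wordArea_congr
      simp only [← mul_mk, ← inv_mk]; group
    simpa using hle

end IsMinimalSplit

/-- Otherwise the relator inserted at a minimal split would start an infinite sequence of Dehn
reductions of decreasing area. -/
theorem exists_isDehnReduction (hR : IsSmallCancellation R) (hw : IsReduced w) (hne : w ≠ [])
    (htop : wordArea R w ≠ ⊤) : ∃ x u v y, x ++ u ++ y = w ∧ IsDehnReduction R x u v y := by
  induction hn : wordArea R w using WellFoundedLT.induction generalizing w with
  | ind n ih =>
    subst hn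
    by_contra! hno
    obtain ⟨X, Y, h⟩ := exists_isSplit hR htop fun h1 ↦ hne (eq_of_mk_eq_mk hw .nil h1)
    obtain ⟨X, Y, h⟩ := h.exists_isMinimalSplit
    obtain ⟨V, s, y, hstate, hlt⟩ := h.exists_isReductionState hR hw hno
    exact hstate.false_of_forall_isDehnReduction hR fun w' hw' hne' hle ↦
      ih _ (hle.trans_lt hlt) hw' hne' (ne_top_of_le_ne_top hstate.ne_top hle) rfl

end MinimalSplit

/-! ### Torsion -/

lemma append_flatten_replicate_append {β : Type*} (a b : List β) (n : ℕ) :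
    a ++ (List.replicate n (b ++ a)).flatten ++ b = (List.replicate (n + 1) (a ++ b)).flatten := by
  induction n with
  | zero => simp
  | succ n ih =>
    rw [List.replicate_succ (n := n + 1), List.flatten_cons, ← ih, List.replicate_succ,
      List.flatten_cons]
    simp only [List.append_assoc]

lemma exists_rotation_of_append_eq_flatten_replicate {β : Type*} {x z w : List β} {n : ℕ}
    (h : x ++ z = (List.replicate n w).flatten) :
    ∃ a b m, w = a ++ b ∧ z <+: (List.replicate m (b ++ a)).flatten := by
  induction n generalizing x with
  | zero => exact ⟨w, [], 0, by simp, by simp_all⟩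
  | succ n ih =>
    rw [List.replicate_succ, List.flatten_cons] at h
    rcases List.append_eq_append_iff.1 h.symm with ⟨x', -, hz⟩ | ⟨b, rfl, rfl⟩
    · exact ih hz.symm
    · exact ⟨x, b, n + 1, rfl, x, append_flatten_replicate_append b x n⟩

/-- A word of minimal length among those that represent a conjugate of `x`, where the words
represent elements of `G` by means of `φ`. -/
structure IsShortestRepresentative {G : Type*} [Group G] (φ : FreeGroup α →* G) (x : G)
    (w : List (α × Bool)) : Prop where
  isConj : IsConj x (φ (mk w))
  length_le : ∀ w', IsConj x (φ (mk w')) → w.length ≤ w'.length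

namespace IsShortestRepresentative

variable {G : Type*} [Group G] {φ : FreeGroup α →* G} {x : G} {w a b u v : List (α × Bool)}

lemma exists_of_surjective (hφ : Function.Surjective φ) (x : G) :
    ∃ w, IsShortestRepresentative φ x w := by
  classical
  obtain ⟨g, rfl⟩ := hφ x
  obtain ⟨w, hw, hmin⟩ := exists_minimalFor_of_wellFoundedLT
    (fun w ↦ IsConj (φ g) (φ (FreeGroup.mk w))) List.length ⟨g.toWord, by rw [mk_toWord]⟩
  exact ⟨w, hw, fun w' hw' ↦ (le_total _ _).elim id (hmin hw')⟩

lemma rotate (h : IsShortestRepresentative φ x (a ++ b)) :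
    IsShortestRepresentative φ x (b ++ a) := by
  refine ⟨h.isConj.trans (isConj_iff.2 ⟨(φ (FreeGroup.mk a))⁻¹, ?_⟩), fun w' hw' ↦ ?_⟩
  · simp only [← mul_mk, _root_.map_mul]; group
  · simpa [add_comm] using h.length_le w' hw'

lemma isReduced (h : IsShortestRepresentative φ x w) : IsReduced w := by
  classical
  by_contra hw
  exact (length_reduce_lt hw).not_ge (h.length_le _ (by rw [reduce.self]; exact h.isConj))

lemma isCyclicallyReduced (h : IsShortestRepresentative φ x w) : IsCyclicallyReduced w := by
  refine ⟨h.isReduced, fun c hc d hd ↦ ?_⟩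
  obtain ⟨v, rfl⟩ := List.getLast?_eq_some_iff.1 hc
  have hrot : IsReduced ([c] ++ v) := h.rotate.isReduced
  rcases v with - | ⟨e, v⟩
  · simp_all
  · obtain rfl : e = d := by simpa using hd
    exact (List.isChain_cons_cons.1 hrot).1

lemma ne_nil (h : IsShortestRepresentative φ x w) (hx : x ≠ 1) : w ≠ [] := by
  rintro rfl
  exact hx (isConj_one_left.1 (by simpa [← one_eq_mk] using h.isConj))

lemma length_le_of_mem (hφ : ∀ r ∈ R, φ (FreeGroup.mk r) = 1)
    (h : IsShortestRepresentative φ x (u ++ a)) (huv : u ++ v ∈ R) : u.length ≤ v.length := by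
  have hmul : φ (FreeGroup.mk u) * φ (FreeGroup.mk v) = 1 := by
    rw [← _root_.map_mul, mul_mk, hφ _ huv]
  have := h.length_le (invRev v ++ a) (by
    rw [← mul_mk, ← inv_mk, _root_.map_mul, _root_.map_inv, ← eq_inv_of_mul_eq_one_left hmul,
      ← _root_.map_mul, mul_mk]
    exact h.isConj)
  simpa using this

/-- Five eighths of a relator cannot be shorter than the period `w`; being longer than `w`, they
agree with their own shift by `w` on a piece that is too long. -/
lemma exists_append_comm_of_prefix (hR : IsSmallCancellation R)
    (hφ : ∀ r ∈ R, φ (FreeGroup.mk r) = 1) (h : IsShortestRepresentative φ x w) {n : ℕ}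
    (hu : u <+: (List.replicate n w).flatten) (huv : u ++ v ∈ R)
    (hlen : 5 * (u ++ v).length ≤ 8 * u.length) :
    ∃ b, b ≠ [] ∧ w ++ b ∈ R ∧ w ++ b = b ++ w := by
  have hpos : 0 < (u ++ v).length := List.length_pos_iff.2 (hR.ne_nil _ huv)
  rw [List.length_append] at hlen hpos
  have hu' : u <+: w ++ (List.replicate n w).flatten := by
    rw [← List.flatten_cons, ← List.replicate_succ, List.replicate_succ', List.flatten_append]
    exact hu.trans (List.prefix_append _ _)
  rcases le_total u.length w.length with huw | hwu
  · obtain ⟨a, rfl⟩ := List.prefix_of_prefix_length_le hu' (List.prefix_append _ _) huw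
    have := h.length_le_of_mem hφ huv
    lia
  · obtain ⟨p, rfl⟩ := List.prefix_of_prefix_length_le (List.prefix_append _ _) hu' hwu
    obtain ⟨q, hq⟩ := List.prefix_of_prefix_length_le ((List.prefix_append_right_inj w).1 hu') hu
      (by simp)
    have hwp : w ++ (p ++ v) ∈ R := by simpa using huv
    have hle : w.length ≤ (p ++ v).length :=
      length_le_of_mem hφ (a := []) (by simpa using h) hwp
    simp only [List.length_append] at hle hlen hpos
    have hvw : v ++ w = q ++ v :=
      hR.eq_of_piece p _ _ (by simpa using hR.rotate_mem _ _ hwp)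
        (by rw [← List.append_assoc, hq]; exact huv)
        (by simp only [List.length_append]; lia)
    refine ⟨p ++ v, ?_, hwp, ?_⟩
    · rw [Ne, ← List.length_eq_zero_iff, List.length_append]
      lia
    · rw [List.append_assoc p, hvw, ← List.append_assoc, ← List.append_assoc, hq]

end IsShortestRepresentative

theorem exists_relator_append_comm_of_pow_eq_one (hR : IsSmallCancellation R) {G : Type*} [Group G]
    {φ : FreeGroup α →* G} (hφ : Function.Surjective φ)
    (hker : φ.ker = Subgroup.normalClosure (mk '' R)) {x : G} {k : ℕ} (hk : k ≠ 0)
    (hx : x ^ k = 1) (hx1 : x ≠ 1) :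
    ∃ a b, a ≠ [] ∧ b ≠ [] ∧ a ++ b ∈ R ∧ a ++ b = b ++ a ∧ IsConj x (φ (mk a)) := by
  obtain ⟨w, hw⟩ := IsShortestRepresentative.exists_of_surjective hφ x
  have hφR : ∀ r ∈ R, φ (mk r) = 1 := fun r hr ↦ by
    rw [← MonoidHom.mem_ker, hker]
    exact Subgroup.subset_normalClosure (Set.mem_image_of_mem mk hr)
  have hpow : mk (List.replicate k w).flatten = mk w ^ k := (FreeGroup.pow_mk k).symm
  have hmem : mk (List.replicate k w).flatten ∈ Subgroup.normalClosure (mk '' R) := by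
    rw [← hker, MonoidHom.mem_ker, hpow, map_pow]
    exact isConj_one_right.1 (hx ▸ hw.isConj.pow k)
  obtain ⟨y, u, v, z, hyuz, hred⟩ := exists_isDehnReduction hR
    (hw.isCyclicallyReduced.flatten_replicate k).isReduced
    (by simp [hk, hw.ne_nil hx1]) (area_ne_top hmem)
  obtain ⟨c, d, m, rfl, hpre⟩ :=
    exists_rotation_of_append_eq_flatten_replicate ((List.append_assoc ..).symm.trans hyuz)
  obtain ⟨b, hb, hmem, hcomm⟩ := hw.rotate.exists_append_comm_of_prefix hR hφR
    ((List.prefix_append u z).trans hpre) hred.mem hred.length_le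
  exact ⟨d ++ c, b, hw.rotate.ne_nil hx1, hb, hmem, hcomm, hw.rotate.isConj⟩

end WordProblem

/-! ### Marker systems -/

section MarkerSystem

variable {α : Type*}

lemma exists_append_of_isRotated {β : Type*} {r c : List β} (h : r ~r c) :
    ∃ a b, c = a ++ b ∧ r = b ++ a := by
  obtain ⟨n, hn, rfl⟩ := List.isRotated_iff_mod.1 h.symm
  exact ⟨c.take n, c.drop n, (List.take_append_drop n c).symm, List.rotate_eq_drop_append_take hn⟩

lemma invRev_isRotated_invRev {r c : List (α × Bool)} (h : r ~r c) : invRev r ~r invRev c :=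
  (h.map _).reverse

/-- The closure of a set of words under cyclic permutations and inverses. -/
def symmetrization (C : Set (List (α × Bool))) : Set (List (α × Bool)) :=
  {r | ∃ c ∈ C, r ~r c ∨ invRev r ~r c}

/-- Distinguished words (*markers*) that occur in every subword of a relator making up at least an
eighth of it and that determine the rest of the relator. They contain a letter whose inverse
does not occur in `C`, so the relators need not be compared with inverses of relators. -/
structure IsMarkerSystem (C : Set (List (α × Bool))) (IsMarker : List (α × Bool) → Prop) :
    Prop where
  exists_infix : ∀ c ∈ C, ∀ p q, p ++ q ~r c → (p ++ q).length ≤ 8 * p.length →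
    ∃ M, IsMarker M ∧ M <:+: p
  eq_of_isRotated : ∀ c ∈ C, ∀ c' ∈ C, ∀ M s s', IsMarker M → M ++ s ~r c → M ++ s' ~r c' → s = s'
  exists_mem : ∀ M, IsMarker M → ∃ l ∈ M, ∀ c ∈ C, (l.1, !l.2) ∉ c

lemma mem_invRev_iff {l : α × Bool} {r : List (α × Bool)} :
    l ∈ invRev r ↔ (l.1, !l.2) ∈ r := by
  simp only [invRev, List.mem_reverse, List.mem_map, Prod.exists, Prod.ext_iff]
  constructor
  · rintro ⟨a, b, h, rfl, hb⟩
    simpa [← hb] using h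
  · exact fun h ↦ ⟨_, _, h, rfl, Bool.not_not _⟩

namespace IsMarkerSystem

variable {C : Set (List (α × Bool))} {IsMarker : List (α × Bool) → Prop}
  {c c' p q q' : List (α × Bool)}

lemma eq_of_isRotated_append (h : IsMarkerSystem C IsMarker) (hc : c ∈ C) (hc' : c' ∈ C)
    (hq : p ++ q ~r c) (hq' : p ++ q' ~r c') (hlen : (p ++ q).length ≤ 8 * p.length) : q = q' := by
  obtain ⟨M, hM, x, y, rfl⟩ := h.exists_infix c hc p q hq hlen
  have hrot (z : List (α × Bool)) : M ++ (y ++ z ++ x) ~r x ++ M ++ y ++ z := by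
    simpa using List.isRotated_append (l := M ++ y ++ z) (l' := x)
  simpa using h.eq_of_isRotated c hc c' hc' M _ _ hM ((hrot q).trans hq) ((hrot q').trans hq')

lemma not_isRotated_of_invRev_isRotated (h : IsMarkerSystem C IsMarker) (hc : c ∈ C) (hc' : c' ∈ C)
    (hq : p ++ q ~r c) (hlen : (p ++ q).length ≤ 8 * p.length) :
    ¬ invRev (p ++ q') ~r c' := by
  intro hq'
  obtain ⟨M, hM, hMp⟩ := h.exists_infix c hc p q hq hlen
  obtain ⟨l, hl, hlC⟩ := h.exists_mem M hM
  exact hlC c' hc' (hq'.mem_iff.1 (mem_invRev_iff.2 (by simp [hMp.subset hl])))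

lemma isSmallCancellation (h : IsMarkerSystem C IsMarker)
    (hcyc : ∀ c ∈ C, IsCyclicallyReduced c) (hne : ∀ c ∈ C, c ≠ []) :
    IsSmallCancellation (symmetrization C) where
  isReduced := by
    have hred {r c : List (α × Bool)} (hc : c ∈ C) (hr : r ~r c) : IsReduced r := by
      obtain ⟨a, b, rfl, rfl⟩ := exists_append_of_isRotated hr
      have := ((hcyc _ hc).flatten_replicate 2).isReduced
      exact this.infix ⟨a, b, by simp [List.replicate_succ]⟩
    rintro r ⟨c, hc, hr | hr⟩
    · exact hred hc hr
    · simpa [invRev_invRev] using isReduced_invRev (hred hc hr)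
  ne_nil := by
    rintro _ ⟨c, hc, hr | hr⟩ rfl <;> exact hne c hc (by simpa [eq_comm] using hr.perm.length_eq)
  rotate_mem := by
    rintro a b ⟨c, hc, hr | hr⟩
    · exact ⟨c, hc, .inl (List.isRotated_append.trans hr)⟩
    · exact ⟨c, hc, .inr ((invRev_isRotated_invRev List.isRotated_append).trans hr)⟩
  invRev_mem := by
    rintro r ⟨c, hc, hr | hr⟩
    · exact ⟨c, hc, .inr (by rwa [invRev_invRev])⟩
    · exact ⟨c, hc, .inl hr⟩
  eq_of_piece := by
    have hinv {p q c : List (α × Bool)} (hr : invRev (p ++ q) ~r c) :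
        invRev p ++ invRev q ~r c := by
      rw [invRev_append] at hr
      exact List.isRotated_append.trans hr
    rintro p q q' ⟨c, hc, hr | hr⟩ ⟨c', hc', hr' | hr'⟩ hlen
    · exact h.eq_of_isRotated_append hc hc' hr hr' hlen
    · exact absurd hr' (h.not_isRotated_of_invRev_isRotated hc hc' hr hlen)
    · have hr' : invRev (invRev p ++ invRev q') ~r c' := by
        rw [invRev_append, invRev_invRev, invRev_invRev]
        exact List.isRotated_append.trans hr'
      exact absurd hr'
        (h.not_isRotated_of_invRev_isRotated hc hc' (hinv hr) (by simpa using hlen))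
    · exact invRev_injective
        (h.eq_of_isRotated_append hc hc' (hinv hr) (hinv hr') (by simpa using hlen))

end IsMarkerSystem

lemma isConj_mk_of_isRotated {r c : List (α × Bool)} (h : r ~r c) : IsConj (mk r) (mk c) := by
  obtain ⟨a, b, rfl, rfl⟩ := exists_append_of_isRotated h
  refine isConj_iff.2 ⟨mk a, ?_⟩
  simp only [← mul_mk]; group

lemma normalClosure_le_of_isConj {G : Type*} [Group G] {s t : Set G}
    (h : ∀ r ∈ s, ∃ r' ∈ t, IsConj r r' ∨ IsConj r⁻¹ r') :
    Subgroup.normalClosure s ≤ Subgroup.normalClosure t := by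
  have hmem {r r' : G} (hr' : r' ∈ t) (hr : IsConj r r') : r ∈ Subgroup.normalClosure t :=
    Subgroup.conjugatesOfSet_subset_normalClosure
      (Group.mem_conjugatesOfSet_iff.2 ⟨r', hr', hr.symm⟩)
  refine Subgroup.normalClosure_le_normal fun r hr ↦ ?_
  rcases h r hr with ⟨r', hr', hc | hc⟩
  · exact hmem hr' hc
  · exact inv_mem_iff.1 (hmem hr' hc)

lemma normalClosure_symmetrization (C : Set (List (α × Bool))) :
    Subgroup.normalClosure (mk '' symmetrization C) = Subgroup.normalClosure (mk '' C) := by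
  refine le_antisymm (normalClosure_le_of_isConj ?_) (Subgroup.normalClosure_mono ?_)
  · rintro _ ⟨r, ⟨c, hc, hr⟩, rfl⟩
    refine ⟨_, Set.mem_image_of_mem mk hc, ?_⟩
    rw [inv_mk]
    exact hr.imp isConj_mk_of_isRotated isConj_mk_of_isRotated
  · exact Set.image_mono fun c hc ↦ ⟨c, hc, .inl (.refl c)⟩

end MarkerSystem

/-! ### Block words -/

section Window

variable {β γ : Type*} {f : γ → List β} {M : ℕ}

lemma length_flatMap_le {L : List γ} (hM : ∀ B ∈ L, (f B).length ≤ M) :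
    (L.flatMap f).length ≤ L.length * M := by
  rw [List.length_flatMap]
  simpa using List.sum_le_card_nsmul (L.map fun B ↦ (f B).length) M (by simpa using hM)

lemma exists_prefix_flatMap {L : List γ} {p : List β} {N : ℕ} (hp : p <+: L.flatMap f)
    (hM : ∀ B ∈ L, (f B).length ≤ M) (hlen : N * M < p.length) :
    ∃ L', L' <+: L ∧ L'.length = N ∧ L'.flatMap f <+: p := by
  have htake : (L.take N).flatMap f <+: L.flatMap f := by
    conv_rhs => rw [← List.take_append_drop N L, List.flatMap_append]
    exact List.prefix_append _ _
  refine ⟨L.take N, List.take_prefix N L, ?_, List.prefix_of_prefix_length_le htake hp ?_⟩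
  · have := hp.length_le.trans (length_flatMap_le hM)
    rw [List.length_take, min_eq_left]
    by_contra! hN
    nlinarith
  · have := length_flatMap_le fun B (hB : B ∈ L.take N) ↦ hM B (List.mem_of_mem_take hB)
    exact (this.trans (Nat.mul_le_mul_right M (List.length_take_le N L))).trans hlen.le

lemma exists_infix_flatMap {L : List γ} {p : List β} {N : ℕ} (hp : p <:+: L.flatMap f)
    (hM : ∀ B ∈ L, (f B).length ≤ M) (hlen : (N + 1) * M < p.length) :
    ∃ L', L' <:+: L ∧ L'.length = N ∧ L'.flatMap f <:+: p := by
  obtain ⟨x, z, h⟩ := hp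
  induction L generalizing x with
  | nil => simp_all
  | cons B L ih =>
    have hB := hM B List.mem_cons_self
    rw [List.flatMap_cons, List.append_assoc] at h
    rcases List.append_eq_append_iff.1 h with ⟨x', hx, hpz⟩ | ⟨x', rfl, hL⟩
    · rcases List.append_eq_append_iff.1 hpz with ⟨p', rfl, -⟩ | ⟨p', rfl, hL⟩
      · simp only [hx, List.length_append] at hB
        nlinarith
      · obtain ⟨L', hL', hN, hL'p⟩ := exists_prefix_flatMap (p := p') ⟨z, hL.symm⟩
          (fun B hB ↦ hM B (List.mem_cons_of_mem _ hB)) (N := N) (by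
            simp only [hx, List.length_append] at hB hlen
            lia)
        exact ⟨L', (hL'.isInfix).trans (List.infix_cons List.infix_rfl), hN,
          hL'p.isInfix.trans (List.suffix_append _ _).isInfix⟩
    · obtain ⟨L', hL', h'⟩ := ih (fun B hB ↦ hM B (List.mem_cons_of_mem _ hB)) x' (by simp [hL])
      exact ⟨L', List.infix_cons hL', h'⟩

end Window

section BlockWord

variable {β : Type*} {y z : β} {B : List β × ℕ} {L L' L₁ L₂ : List (List β × ℕ)}
  {a b r s X : List β} {e : ℕ}

/-- The block `X yᵉ` that a pair `(X, e)` stands for; `y` is its *power letter*. -/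
def block (y : β) (B : List β × ℕ) : List β := B.1 ++ List.replicate B.2 y

/-- The word `X₁ y^e₁ X₂ y^e₂ ⋯` made up of blocks with a common power letter. -/
def blockWord (y : β) (L : List (List β × ℕ)) : List β := L.flatMap (block y)

/-- A pair `(X, e)` that can be read off from the block `X yᵉ`. -/
structure IsBlock (y : β) (B : List β × ℕ) : Prop where
  ne_nil : B.1 ≠ []
  notMem : y ∉ B.1
  exponent_ne_zero : B.2 ≠ 0

lemma IsBlock.exists_eq_concat (h : IsBlock y B) : ∃ a, block y B = a ++ [y] := by
  obtain ⟨e, he⟩ := Nat.exists_eq_succ_of_ne_zero h.exponent_ne_zero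
  exact ⟨B.1 ++ List.replicate e y, by rw [block, he, List.replicate_succ', List.append_assoc]⟩

lemma IsBlock.exists_eq_cons (h : IsBlock y B) : ∃ z t, z ≠ y ∧ block y B = z :: t := by
  obtain ⟨z, X, hX⟩ := List.exists_cons_of_ne_nil h.ne_nil
  refine ⟨z, X ++ List.replicate B.2 y, ?_, by rw [block, hX, List.cons_append]⟩
  rintro rfl
  exact h.notMem (hX ▸ List.mem_cons_self)

@[simp]
lemma blockWord_nil : blockWord y [] = [] := rfl

@[simp]
lemma blockWord_cons : blockWord y (B :: L) = block y B ++ blockWord y L := rfl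

@[simp]
lemma blockWord_append : blockWord y (L₁ ++ L₂) = blockWord y L₁ ++ blockWord y L₂ :=
  List.flatMap_append

lemma ne_of_mem_head?_blockWord (hL : ∀ B ∈ L, IsBlock y B) {c : β}
    (hc : c ∈ (blockWord y L).head?) : c ≠ y := by
  rcases L with - | ⟨B, L⟩
  · simp at hc
  · obtain ⟨z, t, hz, ht⟩ := (hL B List.mem_cons_self).exists_eq_cons
    simp_all

lemma eq_of_mem_getLast?_blockWord (hL : ∀ B ∈ L, IsBlock y B) {c : β}
    (hc : c ∈ (blockWord y L).getLast?) : c = y := by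
  rcases List.eq_nil_or_concat' L with rfl | ⟨L, B, rfl⟩
  · simp at hc
  · obtain ⟨a, ha⟩ := (hL B (by simp)).exists_eq_concat
    simp_all

lemma replicate_append_inj {e e' : ℕ} {W W' : List β} (hW : ∀ c ∈ W.head?, c ≠ y)
    (hW' : ∀ c ∈ W'.head?, c ≠ y) (h : List.replicate e y ++ W = List.replicate e' y ++ W') :
    e = e' ∧ W = W' := by
  induction e generalizing e' with
  | zero => cases e' <;> simp_all [List.replicate_succ]
  | succ e ih =>
    rcases e' with - | e'
    · exact absurd rfl (hW' y (by simp [← show _ = W' from h, List.replicate_succ]))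
    · simp_all [List.replicate_succ]

lemma append_cons_eq_block_append {t W : List β} (hX : y ∉ X) (hB : IsBlock y B)
    (h : X ++ y :: t = block y B ++ W) : X = B.1 ∧ y :: t = List.replicate B.2 y ++ W := by
  obtain ⟨X', e⟩ := B
  obtain ⟨e, rfl⟩ := Nat.exists_eq_succ_of_ne_zero hB.exponent_ne_zero
  have hX' : y ∉ X' := hB.notMem
  simp only [block, List.replicate_succ, List.append_assoc, List.cons_append] at h ⊢
  rcases List.append_eq_append_iff.1 h with ⟨c, hc, hd⟩ | ⟨c, hc, hd⟩ <;>
    rcases c with - | ⟨c, l⟩ <;> simp_all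

lemma block_append_inj {B' : List β × ℕ} {W W' : List β} (hB : IsBlock y B) (hB' : IsBlock y B')
    (hW : ∀ c ∈ W.head?, c ≠ y) (hW' : ∀ c ∈ W'.head?, c ≠ y)
    (h : block y B ++ W = block y B' ++ W') : B = B' ∧ W = W' := by
  obtain ⟨X, e⟩ := B
  obtain ⟨X', e'⟩ := B'
  obtain ⟨e₀, rfl⟩ := Nat.exists_eq_succ_of_ne_zero hB.exponent_ne_zero
  obtain ⟨rfl, h'⟩ := append_cons_eq_block_append (X := X) (t := List.replicate e₀ y ++ W)
    hB.notMem hB' (by simpa [block, List.replicate_succ] using h)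
  obtain ⟨rfl, rfl⟩ := replicate_append_inj (e := e₀ + 1) hW hW'
    (by simpa [List.replicate_succ] using h')
  exact ⟨rfl, rfl⟩

lemma blockWord_inj (hL : ∀ B ∈ L, IsBlock y B) (hL' : ∀ B ∈ L', IsBlock y B)
    (h : blockWord y L = blockWord y L') : L = L' := by
  induction L generalizing L' with
  | nil =>
    rcases L' with - | ⟨B', L'⟩
    · rfl
    · obtain ⟨z, t, -, ht⟩ := (hL' B' List.mem_cons_self).exists_eq_cons
      simp [ht] at h
  | cons B L ih =>
    have hB := hL B List.mem_cons_self
    rcases L' with - | ⟨B', L'⟩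
    · obtain ⟨z, t, -, ht⟩ := hB.exists_eq_cons
      simp [ht] at h
    · obtain ⟨rfl, hW⟩ := block_append_inj hB (hL' B' List.mem_cons_self)
        (fun c ↦ ne_of_mem_head?_blockWord fun B hB ↦ hL B (List.mem_cons_of_mem _ hB))
        (fun c ↦ ne_of_mem_head?_blockWord fun B hB ↦ hL' B (List.mem_cons_of_mem _ hB)) h
      rw [ih (fun B hB ↦ hL B (List.mem_cons_of_mem _ hB))
        (fun B hB ↦ hL' B (List.mem_cons_of_mem _ hB)) hW]

lemma exists_eq_append_of_blockWord_eq_append (hL : ∀ B ∈ L, IsBlock y B)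
    (h : blockWord y L = a ++ b) (ha : ∀ c ∈ a.getLast?, c = y) (hb : ∀ c ∈ b.head?, c ≠ y) :
    ∃ L₁ L₂, L = L₁ ++ L₂ ∧ a = blockWord y L₁ ∧ b = blockWord y L₂ := by
  induction L generalizing a with
  | nil => exact ⟨[], [], by simp_all⟩
  | cons B L ih =>
    rw [blockWord_cons] at h
    rcases List.append_eq_append_iff.1 h with ⟨a', rfl, hL'⟩ | ⟨c, hac, rfl⟩
    · obtain ⟨L₁, L₂, rfl, rfl, rfl⟩ := ih (fun B hB ↦ hL B (List.mem_cons_of_mem _ hB)) hL'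
        fun c hc ↦ ha c (by simp_all)
      exact ⟨B :: L₁, L₂, rfl, rfl, rfl⟩
    · rcases List.eq_nil_or_concat' a with rfl | ⟨a, d, rfl⟩
      · exact ⟨[], B :: L, rfl, rfl, by rw [blockWord_cons, hac, List.nil_append]⟩
      obtain rfl : y = d := (ha d (by simp)).symm
      have hc : ∀ l ∈ c, l = y := by
        have hB := (hL B List.mem_cons_self).notMem
        intro l hl
        rw [block, List.append_assoc, List.singleton_append] at hac
        rcases List.append_eq_append_iff.1 hac with ⟨t, rfl, ht⟩ | ⟨t, ht, hc⟩
        · exact List.eq_of_mem_replicate (n := B.2) (by rw [ht]; simp [hl])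
        · rcases t with - | ⟨d, t⟩
          · exact List.eq_of_mem_replicate (n := B.2)
              ((show y :: c = List.replicate B.2 y from hc) ▸ List.mem_cons_of_mem y hl)
          · obtain ⟨rfl, -⟩ := List.cons.inj hc
            exact absurd (by simp [ht]) hB
      rcases c with - | ⟨l, c⟩
      · exact ⟨[B], L, rfl, by simp [hac], rfl⟩
      · exact absurd (hc l (by simp)) (hb l (by simp))

lemma exists_eq_append_of_isRotated (hL : ∀ B ∈ L, IsBlock y B) (hX : X ≠ []) (hy : y ∉ X)
    (h : X ++ y :: s ++ [y] ~r blockWord y L) :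
    ∃ e L₁ L₂, L = L₁ ++ (X, e) :: L₂ ∧
      y :: s ++ [y] = List.replicate e y ++ blockWord y (L₂ ++ L₁) := by
  obtain ⟨a, b, hab, hba⟩ := exists_append_of_isRotated h
  obtain ⟨x, X', rfl⟩ := List.exists_cons_of_ne_nil hX
  have ha : ∀ c ∈ a.getLast?, c = y := fun c hc ↦ by
    have : c ∈ (b ++ a).getLast? := by simp_all
    rw [← hba, List.getLast?_concat] at this
    exact (Option.some.inj this).symm
  have hb : ∀ c ∈ b.head?, c ≠ y := fun c hc ↦ by
    have : c ∈ (b ++ a).head? := by simp_all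
    obtain rfl : x = c := by simpa [← hba] using this
    exact fun hxy ↦ hy (by simp [hxy])
  obtain ⟨L₁, L₂, rfl, rfl, rfl⟩ := exists_eq_append_of_blockWord_eq_append hL hab ha hb
  rw [← blockWord_append, List.append_assoc] at hba
  rcases L₂ with - | ⟨⟨X₀, e⟩, L₂⟩
  · rcases L₁ with - | ⟨⟨X₀, e⟩, L₁⟩
    · simp at hba
    · rw [List.nil_append, blockWord_cons] at hba
      obtain ⟨rfl, h'⟩ := append_cons_eq_block_append hy (hL _ (by simp)) hba
      exact ⟨e, [], L₁, by simp, by rw [List.append_nil]; exact h'⟩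
  · rw [List.cons_append (as := L₂), blockWord_cons] at hba
    obtain ⟨rfl, h'⟩ := append_cons_eq_block_append hy (hL _ (by simp)) hba
    exact ⟨e, L₁, L₂, rfl, h'⟩

/-- The word `y X yᵉ z`, which locates the block `X yᵉ` in a block word. -/
def marker (y : β) (B : List β × ℕ) (z : β) : List β := y :: (block y B ++ [z])

lemma exists_eq_append_of_marker_append_isRotated (hL : ∀ B ∈ L, IsBlock y B) (hB : IsBlock y B)
    (hz : z ≠ y) (h : marker y B z ++ s ~r blockWord y L) :
    ∃ L₁ L₂, L = L₁ ++ B :: L₂ ∧ z :: (s ++ [y]) = blockWord y (L₂ ++ L₁) := by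
  obtain ⟨X, e⟩ := B
  obtain ⟨e₀, rfl⟩ := Nat.exists_eq_succ_of_ne_zero hB.exponent_ne_zero
  have hrot : X ++ y :: (List.replicate e₀ y ++ z :: s) ++ [y] ~r blockWord y L := by
    refine .trans ?_ h
    simpa [marker, block, List.replicate_succ] using
      (List.isRotated_append (l := [y]) (l' := X ++ y :: (List.replicate e₀ y ++ z :: s))).symm
  obtain ⟨e', L₁, L₂, rfl, hL'⟩ := exists_eq_append_of_isRotated hL hB.ne_nil hB.notMem hrot
  obtain ⟨rfl, h'⟩ := replicate_append_inj (e := e₀ + 1) (W := z :: (s ++ [y]))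
    (by simpa using hz)
    (fun c ↦ ne_of_mem_head?_blockWord (L := L₂ ++ L₁) fun B hB ↦ hL B (by grind))
    (by simpa only [List.replicate_succ, List.cons_append, List.append_assoc] using hL')
  exact ⟨L₁, L₂, rfl, h'⟩

lemma exists_marker_infix {B₁ B₂ B₃ : List β × ℕ} (h₁ : IsBlock y B₁) (h₃ : IsBlock y B₃) :
    ∃ z ≠ y, marker y B₂ z <:+: blockWord y [B₁, B₂, B₃] := by
  obtain ⟨a, ha⟩ := h₁.exists_eq_concat
  obtain ⟨z, b, hz, hb⟩ := h₃.exists_eq_cons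
  exact ⟨z, hz, a, b, by simp [marker, ha, hb]⟩

lemma exists_append_comm_of_isRotated {W : List β} (hrot : a ++ b ~r W) (h : a ++ b = b ++ a) :
    ∃ a' b', W = a' ++ b' ∧ b' ++ a' = W ∧ a'.length = a.length ∧ b'.length = b.length := by
  obtain ⟨n, rfl⟩ := hrot
  have hfix : ((a ++ b).rotate n).rotate a.length = (a ++ b).rotate n := by
    rw [List.rotate_rotate, Nat.add_comm, ← List.rotate_rotate, List.rotate_append_length_eq, ← h]
  refine ⟨_, _, (List.take_append_drop a.length _).symm, ?_, by simp, by simp⟩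
  rwa [List.rotate_eq_drop_append_take (by simp)] at hfix

lemma eq_nil_of_append_comm (hL : ∀ B ∈ L, IsBlock y B) (hnd : L.Nodup)
    (hrot : a ++ b ~r blockWord y L) (h : a ++ b = b ++ a) : a = [] ∨ b = [] := by
  obtain ⟨a', b', hab, hba, ha, hb⟩ := exists_append_comm_of_isRotated hrot h
  obtain ⟨L₁, L₂, rfl, rfl, rfl⟩ := exists_eq_append_of_blockWord_eq_append hL hab
    (fun c hc ↦ eq_of_mem_getLast?_blockWord hL (hba ▸ List.mem_getLast?_append_of_mem_getLast? hc))
    (fun c hc ↦ ne_of_mem_head?_blockWord hL (hba ▸ List.mem_head?_append_of_mem_head? hc))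
  have hcomm : L₂ ++ L₁ = L₁ ++ L₂ :=
    blockWord_inj (fun B hB ↦ hL B (by grind)) hL (by rw [← hba, blockWord_append])
  rcases L₁ with - | ⟨B, L₁⟩
  · exact .inl (List.length_eq_zero_iff.1 ha.symm)
  · rcases L₂ with - | ⟨B', L₂⟩
    · exact .inr (List.length_eq_zero_iff.1 hb.symm)
    · simp_all

lemma exists_window_of_isRotated {p q : List β} {M N : ℕ} (hL : ∀ B ∈ L, (block y B).length ≤ M)
    (h : p ++ q ~r blockWord y L) (hlen : (N + 1) * M < p.length) :
    ∃ L', L' <:+: L ++ L ∧ L'.length = N ∧ blockWord y L' <:+: p := by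
  obtain ⟨a, b, hab, hpq⟩ := exists_append_of_isRotated h
  refine exists_infix_flatMap (f := block y) ?_ (by simpa using hL) hlen
  refine .trans ⟨a, q ++ b, ?_⟩ (List.infix_refl (blockWord y (L ++ L)))
  rw [blockWord_append, hab, ← List.append_assoc, List.append_assoc a, hpq]
  simp only [List.append_assoc]

lemma blockWord_infix (h : L' <:+: L) :
    blockWord y L' <:+: blockWord y L := by
  obtain ⟨L₁, L₂, rfl⟩ := h
  exact ⟨blockWord y L₁, blockWord y L₂, by simp only [blockWord_append]⟩

end BlockWord

section ReducedBlock

variable {α : Type*} {y : α × Bool} {B : List (α × Bool) × ℕ} {L : List (List (α × Bool) × ℕ)}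

/-- A block of letters whose block words are cyclically reduced, as no generator underlies both
the power letter and the rest of a block. -/
structure IsReducedBlock (y : α × Bool) (B : List (α × Bool) × ℕ) : Prop where
  ne_nil : B.1 ≠ []
  isReduced : IsReduced B.1
  fst_ne : ∀ l ∈ B.1, l.1 ≠ y.1
  exponent_ne_zero : B.2 ≠ 0

lemma isReduced_of_forall_snd {w : List (α × Bool)} (h : ∀ l ∈ w, l.2 = true) : IsReduced w :=
  (List.pairwise_of_forall_mem_list fun l hl l' hl' _ ↦ by rw [h l hl, h l' hl']).isChain

lemma isReduced_replicate {n : ℕ} : IsReduced (.replicate n y) :=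
  List.isChain_replicate_of_rel n fun _ ↦ rfl

lemma mk_replicate {n : ℕ} : mk (.replicate n y) = mk [y] ^ n := by
  simp [pow_mk]

lemma mk_blockWord :
    mk (blockWord y L) = (L.map fun B ↦ mk B.1 * mk [y] ^ B.2).prod := by
  induction L with
  | nil => rfl
  | cons B L ih =>
    rw [blockWord_cons, ← mul_mk, ih, block, ← mul_mk, mk_replicate, List.map_cons, List.prod_cons]

namespace IsReducedBlock

lemma isBlock (h : IsReducedBlock y B) : IsBlock y B :=
  ⟨h.ne_nil, fun hy ↦ h.fst_ne y hy rfl, h.exponent_ne_zero⟩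

lemma fst_ne_of_mem_head?_blockWord (hL : ∀ B ∈ L, IsReducedBlock y B) {l : α × Bool}
    (hl : l ∈ (blockWord y L).head?) : l.1 ≠ y.1 := by
  rcases L with - | ⟨B, L⟩
  · simp at hl
  · have hB := hL B List.mem_cons_self
    obtain ⟨x, X, hX⟩ := List.exists_cons_of_ne_nil hB.ne_nil
    obtain rfl : x = l := by simpa [block, hX] using hl
    exact hB.fst_ne x (hX ▸ List.mem_cons_self)

lemma isReduced_block (h : IsReducedBlock y B) : IsReduced (block y B) := by
  refine List.isChain_append.2 ⟨h.isReduced, isReduced_replicate, fun l hl l' hl' hll' ↦ ?_⟩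
  obtain rfl := List.eq_of_mem_replicate (List.mem_of_mem_head? hl')
  exact absurd hll' (h.fst_ne l (List.mem_of_mem_getLast? hl))

lemma isReduced_blockWord (hL : ∀ B ∈ L, IsReducedBlock y B) : IsReduced (blockWord y L) := by
  induction L with
  | nil => exact .nil
  | cons B L ih =>
    have hB := hL B List.mem_cons_self
    have hL' : ∀ B ∈ L, IsReducedBlock y B := fun B hB ↦ hL B (List.mem_cons_of_mem _ hB)
    refine List.isChain_append.2 ⟨hB.isReduced_block, ih hL', fun l hl l' hl' hll' ↦ ?_⟩
    obtain ⟨a, ha⟩ := hB.isBlock.exists_eq_concat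
    obtain rfl : y = l := by simpa [ha] using hl
    exact absurd hll'.symm (fst_ne_of_mem_head?_blockWord hL' hl')

lemma isCyclicallyReduced_blockWord (hL : ∀ B ∈ L, IsReducedBlock y B) :
    IsCyclicallyReduced (blockWord y L) := by
  refine ⟨isReduced_blockWord hL, fun l hl l' hl' hll' ↦ ?_⟩
  obtain rfl := eq_of_mem_getLast?_blockWord (fun B hB ↦ (hL B hB).isBlock) hl
  exact absurd hll'.symm (fst_ne_of_mem_head?_blockWord hL hl')

end IsReducedBlock

end ReducedBlock

/-! ### The relators of `G(𝒜)` -/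

section Relators

variable {A : Type} {S : IndexedStructure} {x y x' y' : GenSym A} {lo lo' m n : ℕ}

/-- The triples for which `chainProd lo x y` is a relator of `G(𝒜)`. -/
inductive ChainRelator {A : Type} : GenSym A → GenSym A → ℕ → Prop
  | f1_f2 : ChainRelator .f1 .f2 4000
  | f2_f1 : ChainRelator .f2 .f1 4000
  | b_f1 : ChainRelator .b .f1 1000
  | b_f2 : ChainRelator .b .f2 1000
  | c_f1 : ChainRelator .c .f1 2000
  | c_f2 : ChainRelator .c .f2 2000
  | d_f1 : ChainRelator .d .f1 3000
  | d_f2 : ChainRelator .d .f2 3000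
  | elt_c (a : A) : ChainRelator (.elt a) .c 0
  | elt_d (a : A) : ChainRelator (.elt a) .d 0

namespace ChainRelator

lemma ne (h : ChainRelator x y lo) : x ≠ y := by
  cases h <;> simp

lemma le (h : ChainRelator x y lo) : lo ≤ 4000 := by
  cases h <;> simp

lemma ne_b (h : ChainRelator x y lo) : y ≠ .b := by
  cases h <;> simp

lemma ne_elt (h : ChainRelator x y lo) (a : A) : y ≠ .elt a := by
  cases h <;> simp

lemma offset_unique (h : ChainRelator x y lo) (h' : ChainRelator x y lo') : lo = lo' := by
  cases h <;> cases h' <;> rfl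

lemma offset_ne_zero_of_swap (h : ChainRelator x y lo) (h' : ChainRelator y x lo') : lo ≠ 0 := by
  cases h <;> cases h' <;> simp

end ChainRelator

/-- The blocks of the word `x y^{(lo+1)²} ⋯ x y^{(lo+1000)²}`. -/
def chainBlocks (x : GenSym A) (lo : ℕ) : List (List (GenSym A × Bool) × ℕ) :=
  (List.range 1000).map fun k ↦ ([(x, true)], (lo + k + 1) ^ 2)

lemma mem_chainBlocks {B : List (GenSym A × Bool) × ℕ} :
    B ∈ chainBlocks x lo ↔ ∃ k < 1000, ([(x, true)], (lo + k + 1) ^ 2) = B := by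
  simp [chainBlocks]

lemma chainBlocks_nodup : (chainBlocks x lo).Nodup :=
  List.nodup_range.map fun i j h ↦ by simpa using (Prod.ext_iff.1 h).2

/-- The word `a₁ ⋯ aₙ`. -/
def eltWord (as : Fin n → A) : List (GenSym A × Bool) := List.ofFn fun i ↦ (.elt (as i), true)

lemma eltWord_injective : Function.Injective (eltWord (A := A) (n := n)) := fun as as' h ↦ by
  funext i
  simpa using congrFun (List.ofFn_injective h) i

lemma snd_of_mem_eltWord {as : Fin n → A} {l : GenSym A × Bool} (hl : l ∈ eltWord as) :
    l.2 = true := by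
  obtain ⟨i, rfl⟩ := List.mem_ofFn.1 hl
  rfl

open Classical in
/-- What remains of `a₁ ⋯ aₙ` when it is preceded in the relator of the `m`-th symbol, read
cyclically, by the inverse of the value of a function symbol. -/
noncomputable def closingWord (S : IndexedStructure) (m : ℕ) (as : Fin (S.arity m) → S.A) :
    List (GenSym S.A × Bool) :=
  if S.isFunc m then reduce ((.elt (S.funcInterp m as), false) :: eltWord as) else eltWord as

lemma isReduced_closingWord {as : Fin (S.arity m) → S.A} : IsReduced (closingWord S m as) := by
  classical
  unfold closingWord
  split_ifs
  · exact isReduced_iff_reduce_eq.2 reduce.idem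
  · exact isReduced_of_forall_snd fun _ ↦ snd_of_mem_eltWord

lemma length_closingWord_le {as : Fin (S.arity m) → S.A} :
    (closingWord S m as).length ≤ S.arity m + 1 := by
  classical
  unfold closingWord
  split_ifs
  · exact reduce.red.length_le.trans (by simp [eltWord])
  · simp [eltWord]

lemma exists_elt_of_mem_eltWord {as : Fin n → A} {l : GenSym A × Bool} (hl : l ∈ eltWord as) :
    ∃ a, l.1 = .elt a := by
  obtain ⟨i, rfl⟩ := List.mem_ofFn.1 hl
  exact ⟨_, rfl⟩

lemma exists_elt_of_mem_closingWord {as : Fin (S.arity m) → S.A} {l : GenSym S.A × Bool}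
    (hl : l ∈ closingWord S m as) : ∃ a, l.1 = .elt a := by
  classical
  unfold closingWord at hl
  split_ifs at hl
  · rcases List.mem_cons.1 (reduce.red.sublist.subset hl) with rfl | hl
    · exact ⟨_, rfl⟩
    · exact exists_elt_of_mem_eltWord hl
  · exact exists_elt_of_mem_eltWord hl

/-- The blocks of the cyclic word `X b^{100m+2} ⋯ X b^{100m+100} X' b^{100m+1}`. If `X'` is empty,
the last two powers of `b` merge. -/
def symbolBlocks {α : Type*} (m : ℕ) (X X' : List α) : List (List α × ℕ) :=
  ((List.range 98).map fun k ↦ (X, 100 * m + 2 + k)) ++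
    if X' = [] then [(X, 200 * m + 101)] else [(X, 100 * m + 100), (X', 100 * m + 1)]

section SymbolBlocks

variable {α : Type*} {B : List α × ℕ} {X X' : List α}

lemma mem_symbolBlocks (hB : B ∈ symbolBlocks m X X') :
    (B.1 = X ∨ X' ≠ [] ∧ B.1 = X') ∧ B.2 ≠ 0 ∧ B.2 ≤ 200 * m + 101 := by
  unfold symbolBlocks at hB
  split_ifs at hB <;> grind

lemma of_mem_symbolBlocks (hB : B ∈ symbolBlocks m X X') (hmod : B.2 % 100 ≠ 1) :
    B.1 = X ∧ (B.2 - 1) / 100 = m := by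
  unfold symbolBlocks at hB
  split_ifs at hB <;> grind

lemma symbolBlocks_nodup : (symbolBlocks m X X').Nodup := by
  refine .of_map Prod.snd ?_
  have hmid : ((List.range 98).map fun k ↦ 100 * m + 2 + k).Nodup :=
    List.nodup_range.map (add_right_injective _)
  rw [symbolBlocks, List.map_append, List.map_map]
  refine hmid.append ?_ ?_
  · split_ifs <;> simp
  · grind [List.disjoint_left]

lemma countP_symbolBlocks : (symbolBlocks m X X').countP (·.2 % 100 = 1) = 1 := by
  have hmid : ((List.range 98).map fun k ↦ (X, 100 * m + 2 + k)).countP (·.2 % 100 = 1) = 0 :=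
    List.countP_eq_zero.2 (by simp only [List.mem_map, List.mem_range]; grind)
  rw [symbolBlocks, List.countP_append, hmid]
  grind

end SymbolBlocks

lemma length_blockWord_map_range {β : Type*} {y : β} {N : ℕ} {f : ℕ → List β × ℕ} :
    (blockWord y ((List.range N).map f)).length =
      ∑ k ∈ Finset.range N, ((f k).1.length + (f k).2) := by
  induction N with
  | zero => rfl
  | succ N ih => simp [List.range_succ, Finset.sum_range_succ, block, ← ih]

lemma add_pow_three_le (a N : ℕ) :
    (a + N) ^ 3 ≤ a ^ 3 + 3 * ∑ k ∈ Finset.range N, (a + k + 1) ^ 2 := by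
  induction N with
  | zero => simp
  | succ N ih =>
    calc (a + (N + 1)) ^ 3 ≤ (a + N) ^ 3 + 3 * (a + N + 1) ^ 2 := by lia
      _ ≤ a ^ 3 + 3 * ∑ k ∈ Finset.range (N + 1), (a + k + 1) ^ 2 := by
        rw [Finset.sum_range_succ]
        lia

lemma length_blockWord_chainBlocks {y : GenSym A × Bool} :
    32 * ((lo + 1000) ^ 2 + 1) < (blockWord y (chainBlocks x lo)).length := by
  have hsum := add_pow_three_le lo 1000
  simp only [chainBlocks, length_blockWord_map_range, Finset.sum_add_distrib, List.length_singleton,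
    Finset.sum_const, Finset.card_range, smul_eq_mul]
  generalize ∑ k ∈ Finset.range 1000, (lo + k + 1) ^ 2 = N at *
  ring_nf at *
  lia

lemma length_blockWord_symbolBlocks {α : Type*} {y : α} {X X' : List α} :
    98 * X.length + 9800 * m + 4949 ≤ (blockWord y (symbolBlocks m X X')).length := by
  have hsum : ∑ k ∈ Finset.range 98, (100 * m + 2 + k) = 9800 * m + 4949 := by
    rw [Finset.sum_add_distrib, Finset.sum_const, Finset.card_range,
      show ∑ k ∈ Finset.range 98, k = 4753 from rfl]
    lia
  rw [symbolBlocks, blockWord_append, List.length_append, length_blockWord_map_range,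
    Finset.sum_add_distrib, hsum]
  simp only [Finset.sum_const, Finset.card_range, smul_eq_mul]
  lia

end Relators

section Presentation

variable {A : Type} {S : IndexedStructure} {p₁ p₂ : ℕ}

/-- The generators and exponents for which `fᵖ` is a relator of `G(𝒜)`. -/
inductive PowerRelator {A : Type} (p₁ p₂ : ℕ) : GenSym A → ℕ → Prop
  | f1 : PowerRelator p₁ p₂ .f1 p₁
  | f2 : PowerRelator p₁ p₂ .f2 p₂

/-- The power letters and block sequences of the remaining relators of `G(𝒜)`. -/
inductive BlockRelator (S : IndexedStructure) :
    GenSym S.A → List (List (GenSym S.A × Bool) × ℕ) → Prop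
  | chain {x y : GenSym S.A} {lo : ℕ} (h : ChainRelator x y lo) :
      BlockRelator S y (chainBlocks x lo)
  | symbol {m : ℕ} (hm : 1 ≤ m) (as : Fin (S.arity m) → S.A) (h : S.isFunc m ∨ S.relInterp m as) :
      BlockRelator S .b (symbolBlocks m (eltWord as) (closingWord S m as))

/-- The relators of `G(𝒜)`, cyclically reduced. -/
def relatorWords (S : IndexedStructure) (p₁ p₂ : ℕ) : Set (List (GenSym S.A × Bool)) :=
  {c | ∃ f p, PowerRelator p₁ p₂ f p ∧ c = .replicate p (f, true)} ∪
    {c | ∃ y L, BlockRelator S y L ∧ c = blockWord (y, true) L}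

lemma mem_blockWord {β : Type*} {y l : β} {L : List (List β × ℕ)} (hl : l ∈ blockWord y L) :
    l = y ∨ ∃ B ∈ L, l ∈ B.1 := by
  obtain ⟨B, hB, hl⟩ := List.mem_flatMap.1 hl
  rcases List.mem_append.1 hl with hl | hl
  · exact .inr ⟨B, hB, hl⟩
  · exact .inl (List.eq_of_mem_replicate hl)

lemma mem_blockWord_chainBlocks {x y : GenSym A} {lo : ℕ} {l : GenSym A × Bool}
    (hl : l ∈ blockWord (y, true) (chainBlocks x lo)) : l = (y, true) ∨ l = (x, true) := by
  refine (mem_blockWord hl).imp_right ?_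
  rintro ⟨B, hB, hl⟩
  obtain ⟨k, -, rfl⟩ := mem_chainBlocks.1 hB
  exact List.mem_singleton.1 hl

lemma exists_elt_of_mem_symbolBlocks {m : ℕ} {as : Fin (S.arity m) → S.A}
    {B : List (GenSym S.A × Bool) × ℕ}
    (hB : B ∈ symbolBlocks m (eltWord as) (closingWord S m as)) {l : GenSym S.A × Bool}
    (hl : l ∈ B.1) : ∃ a, l.1 = .elt a := by
  obtain ⟨h | ⟨-, h⟩, -⟩ := mem_symbolBlocks hB
  · exact exists_elt_of_mem_eltWord (h ▸ hl)
  · exact exists_elt_of_mem_closingWord (h ▸ hl)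

lemma eltWord_ne_nil {m : ℕ} (hm : 1 ≤ m) {as : Fin (S.arity m) → S.A} : eltWord as ≠ [] := by
  have := S.arity_pos m hm
  simp only [eltWord, ne_eq, List.ofFn_eq_nil_iff]
  lia

namespace BlockRelator

variable {y y' : GenSym S.A} {L L' : List (List (GenSym S.A × Bool) × ℕ)}
  {B : List (GenSym S.A × Bool) × ℕ} {z l : GenSym S.A × Bool}

lemma ne_elt (h : BlockRelator S y L) (a : S.A) : y ≠ .elt a := by
  rcases h with h | -
  · exact h.ne_elt a
  · simp

lemma isReducedBlock (h : BlockRelator S y L) (hB : B ∈ L) : IsReducedBlock (y, true) B := by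
  rcases h with @⟨x, _, lo, h⟩ | @⟨m, hm, as, -⟩
  · obtain ⟨k, -, rfl⟩ := mem_chainBlocks.1 hB
    exact ⟨by simp, .singleton, by simp [h.ne], by simp⟩
  · obtain ⟨hB₁, hB₂, -⟩ := mem_symbolBlocks hB
    refine ⟨?_, ?_, fun l hl ↦ ?_, hB₂⟩
    · rcases hB₁ with hB₁ | ⟨hne, hB₁⟩ <;> rw [hB₁]
      exacts [eltWord_ne_nil hm, hne]
    · rcases hB₁ with hB₁ | ⟨-, hB₁⟩ <;> rw [hB₁]
      exacts [isReduced_of_forall_snd fun _ ↦ snd_of_mem_eltWord, isReduced_closingWord]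
    · obtain ⟨a, ha⟩ := exists_elt_of_mem_symbolBlocks hB hl
      simp [ha]

lemma isBlock (h : BlockRelator S y L) (B : List (GenSym S.A × Bool) × ℕ) (hB : B ∈ L) :
    IsBlock (y, true) B :=
  (h.isReducedBlock hB).isBlock

lemma nodup (h : BlockRelator S y L) : L.Nodup := by
  cases h
  exacts [chainBlocks_nodup, symbolBlocks_nodup]

lemma exists_elt_of_false_mem {g : GenSym S.A} (h : BlockRelator S y L)
    (hg : (g, false) ∈ blockWord (y, true) L) : ∃ a, g = .elt a := by
  rcases h with h | @⟨m, hm, as, -⟩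
  · rcases mem_blockWord_chainBlocks hg with h | h <;> simp at h
  · rcases mem_blockWord hg with h | ⟨B, hB, hg⟩
    · simp at h
    · exact exists_elt_of_mem_symbolBlocks hB hg

/-- The blocks with power letter `b` and exponents `100m + 1` and `200m + 101` contain too little
information. -/
lemma eq_of_mem (h : BlockRelator S y L) (h' : BlockRelator S y L') (hB : B ∈ L) (hB' : B ∈ L')
    (hgood : y = .b → B.2 % 100 ≠ 1) : L = L' := by
  rcases h with @⟨x, _, lo, h⟩ | @⟨m, hm, as, h⟩
  · rcases h' with @⟨x', _, lo', h'⟩ | _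
    · obtain ⟨k, -, rfl⟩ := mem_chainBlocks.1 hB
      obtain ⟨k', -, heq⟩ := mem_chainBlocks.1 hB'
      obtain rfl : x' = x := by simpa using (Prod.ext_iff.1 heq).1
      rw [h.offset_unique h']
    · exact absurd rfl h.ne_b
  · generalize hy : GenSym.b = y at h'
    rcases h' with @⟨x', _, lo', h'⟩ | @⟨m', hm', as', h'⟩
    · exact absurd hy.symm h'.ne_b
    · obtain ⟨hX, rfl⟩ := of_mem_symbolBlocks hB (hgood rfl)
      obtain ⟨hX', rfl⟩ := of_mem_symbolBlocks hB' (hgood rfl)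
      obtain rfl := eltWord_injective (hX.symm.trans hX')
      rfl

/-- The letters `f₁` and `f₂` occur in both roles, but all exponents are larger than `1`. -/
lemma not_marker_isRotated_swap {x y : GenSym S.A} {lo lo' : ℕ} {s : List (GenSym S.A × Bool)}
    (h : ChainRelator x y lo) (h' : ChainRelator y x lo') (hB : B ∈ chainBlocks x lo)
    (hz : z ≠ (y, true)) :
    ¬ marker (y, true) B z ++ s ~r blockWord (x, true) (chainBlocks y lo') := by
  intro hrot
  obtain ⟨k, -, rfl⟩ := mem_chainBlocks.1 hB
  have hz' := mem_blockWord_chainBlocks ((hrot.mem_iff (a := z)).1 (by simp [marker]))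
  obtain rfl : z = (x, true) := hz'.resolve_right hz
  have hrot' : List.replicate ((lo + k + 1) ^ 2) (y, true) ++ (x, true) :: (s ++ [(y, true)]) ++
      [(x, true)] ~r blockWord (x, true) (chainBlocks y lo') := by
    refine .trans ?_ hrot
    simpa [marker, block] using (List.isRotated_append (l := [(y, true), (x, true)])
      (l' := .replicate ((lo + k + 1) ^ 2) (y, true) ++ (x, true) :: s)).symm
  obtain ⟨e, L₁, L₂, hL, -⟩ := exists_eq_append_of_isRotated (BlockRelator.chain h').isBlock
    (by simp) (by simp [h.ne]) hrot'
  obtain ⟨k', -, hk'⟩ := mem_chainBlocks.1 (hL ▸ List.mem_append_right L₁ List.mem_cons_self)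
  have hexp : lo + k + 1 = 1 := by simpa using congrArg (List.length ∘ Prod.fst) hk'.symm
  exact h.offset_ne_zero_of_swap h' (by lia)

lemma power_letter_eq {s : List (GenSym S.A × Bool)} (h : BlockRelator S y L)
    (h' : BlockRelator S y' L') (hB : B ∈ L) (hz : z ≠ (y, true))
    (hrot : marker (y, true) B z ++ s ~r blockWord (y', true) L') : y = y' := by
  by_contra hne
  have hy : (y, true) ∈ blockWord (y', true) L' := hrot.mem_iff.1 (by simp [marker])
  obtain ⟨l, X, hX⟩ := List.exists_cons_of_ne_nil (h.isBlock B hB).ne_nil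
  have hlB : l ∈ B.1 := hX ▸ List.mem_cons_self
  have hl : l ∈ blockWord (y', true) L' := hrot.mem_iff.1 (by simp [marker, block, hlB])
  rcases h' with @⟨x', _, lo', h'⟩ | @⟨m', hm', as', -⟩
  · obtain rfl : y = x' := by simpa [hne] using mem_blockWord_chainBlocks hy
    have hl := mem_blockWord_chainBlocks hl
    rcases h with @⟨x, _, lo, h⟩ | _
    · obtain ⟨k, -, rfl⟩ := mem_chainBlocks.1 hB
      obtain rfl : l = (x, true) := List.mem_singleton.1 hlB
      obtain rfl : x = y' := by simpa [h.ne] using hl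
      exact not_marker_isRotated_swap h h' hB hz hrot
    · obtain ⟨a, ha⟩ := exists_elt_of_mem_symbolBlocks hB hlB
      rcases hl with rfl | rfl
      · exact h'.ne_elt a ha
      · simp at ha
  · obtain ⟨B', hB', hy⟩ := (mem_blockWord hy).resolve_left (by simpa using hne)
    obtain ⟨a, ha⟩ := exists_elt_of_mem_symbolBlocks hB' hy
    exact h.ne_elt a ha

end BlockRelator

lemma length_block_le_of_mem_chainBlocks {x : GenSym A} {y : GenSym A × Bool} {lo : ℕ}
    {B : List (GenSym A × Bool) × ℕ} (hB : B ∈ chainBlocks x lo) :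
    (block y B).length ≤ (lo + 1000) ^ 2 + 1 := by
  obtain ⟨k, hk, rfl⟩ := mem_chainBlocks.1 hB
  have : (lo + k + 1) ^ 2 ≤ (lo + 1000) ^ 2 := Nat.pow_le_pow_left (by lia) 2
  simpa [block, Nat.add_comm] using this

lemma length_block_le_of_mem_symbolBlocks {α : Type*} {y : α} {m : ℕ} {X X' : List α}
    {B : List α × ℕ} (hX : X'.length ≤ X.length + 1) (hB : B ∈ symbolBlocks m X X') :
    (block y B).length ≤ X.length + 200 * m + 102 := by
  obtain ⟨h | ⟨-, h⟩, -, hB⟩ := mem_symbolBlocks hB <;>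
    rw [block, List.length_append, List.length_replicate, h] <;> lia

lemma exists_window_of_symbolBlocks {α : Type*} {m : ℕ} {X X' : List α} {L : List (List α × ℕ)}
    (hL : L <:+: symbolBlocks m X X' ++ symbolBlocks m X X') (hlen : L.length = 5) :
    ∃ B₁ B₂ B₃, [B₁, B₂, B₃] <:+: L ∧ B₂.2 % 100 ≠ 1 := by
  have hcount := hL.sublist.countP_le (p := (·.2 % 100 = 1))
  rw [List.countP_append, countP_symbolBlocks] at hcount
  match L, hlen with
  | [B₁, B₂, B₃, B₄, B₅], _ =>
    by_contra! h
    have h₂ := h B₁ B₂ B₃ ⟨[], [B₄, B₅], rfl⟩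
    have h₃ := h B₂ B₃ B₄ ⟨[B₁], [B₅], rfl⟩
    have h₄ := h B₃ B₄ B₅ ⟨[B₁, B₂], [], rfl⟩
    simp [List.countP_cons, h₂, h₃, h₄] at hcount
    lia

namespace BlockRelator

variable {y : GenSym S.A} {L : List (List (GenSym S.A × Bool) × ℕ)} {p q : List (GenSym S.A × Bool)}

lemma exists_window (h : BlockRelator S y L) (hrot : p ++ q ~r blockWord (y, true) L)
    (hlen : (p ++ q).length ≤ 8 * p.length) :
    ∃ B₁ B₂ B₃, [B₁, B₂, B₃] <:+: L ++ L ∧ blockWord (y, true) [B₁, B₂, B₃] <:+: p ∧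
      (y = .b → B₂.2 % 100 ≠ 1) := by
  rw [hrot.perm.length_eq] at hlen
  rcases h with @⟨x, _, lo, h⟩ | @⟨m, hm, as, -⟩
  · have := length_blockWord_chainBlocks (x := x) (y := (y, true)) (lo := lo)
    obtain ⟨L', hL', hlen', hp⟩ := exists_window_of_isRotated (N := 3)
      (fun B hB ↦ length_block_le_of_mem_chainBlocks hB) hrot (by lia)
    obtain ⟨B₁, B₂, B₃, rfl⟩ := List.length_eq_three.1 hlen'
    exact ⟨B₁, B₂, B₃, hL', hp, fun hy ↦ absurd hy h.ne_b⟩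
  · have hX : (closingWord S m as).length ≤ (eltWord as).length + 1 := by
      simpa [eltWord] using length_closingWord_le (as := as)
    have := length_blockWord_symbolBlocks (m := m) (y := ((.b, true) : GenSym S.A × Bool))
      (X := eltWord as) (X' := closingWord S m as)
    obtain ⟨L', hL', hlen', hp⟩ := exists_window_of_isRotated (N := 5)
      (fun B hB ↦ length_block_le_of_mem_symbolBlocks hX hB) hrot (by lia)
    obtain ⟨B₁, B₂, B₃, hB, hmod⟩ := exists_window_of_symbolBlocks hL' hlen'
    exact ⟨B₁, B₂, B₃, hB.trans hL', (blockWord_infix hB).trans hp, fun _ ↦ hmod⟩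

lemma exists_marker (h : BlockRelator S y L) (hrot : p ++ q ~r blockWord (y, true) L)
    (hlen : (p ++ q).length ≤ 8 * p.length) :
    ∃ B ∈ L, (y = .b → B.2 % 100 ≠ 1) ∧ ∃ z ≠ (y, true), marker (y, true) B z <:+: p := by
  obtain ⟨B₁, B₂, B₃, hB, hp, hgood⟩ := h.exists_window hrot hlen
  have hmem (B) (hB' : B ∈ [B₁, B₂, B₃]) : B ∈ L := by simpa using hB.subset hB'
  obtain ⟨z, hz, hM⟩ := exists_marker_infix (B₂ := B₂) (h.isBlock B₁ (hmem B₁ (by simp)))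
    (h.isBlock B₃ (hmem B₃ (by simp)))
  exact ⟨B₂, hmem B₂ (by simp), hgood, z, hz, hM.trans hp⟩

lemma eq_of_marker_isRotated {y' : GenSym S.A} {L' : List (List (GenSym S.A × Bool) × ℕ)}
    {B : List (GenSym S.A × Bool) × ℕ} {z : GenSym S.A × Bool}
    {s : List (GenSym S.A × Bool)} (h : BlockRelator S y L) (h' : BlockRelator S y' L')
    (hB : B ∈ L) (hgood : y = .b → B.2 % 100 ≠ 1) (hz : z ≠ (y, true))
    (hrot : marker (y, true) B z ++ s ~r blockWord (y', true) L') :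
    y = y' ∧ ∃ L₁ L₂, L = L₁ ++ B :: L₂ ∧ z :: (s ++ [(y, true)]) =
      blockWord (y, true) (L₂ ++ L₁) := by
  obtain rfl := h.power_letter_eq h' hB hz hrot
  obtain ⟨L₁, L₂, rfl, hs⟩ :=
    exists_eq_append_of_marker_append_isRotated h'.isBlock (h.isBlock B hB) hz hrot
  exact ⟨rfl, L₁, L₂, h.eq_of_mem h' hB (by simp) hgood, hs⟩

lemma not_replicate_isRotated {f : GenSym S.A} {p K : ℕ} (h : BlockRelator S y L)
    (hf : PowerRelator p₁ p₂ f p) (hK : 10 ^ 8 ≤ K) :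
    ¬ List.replicate K (f, true) ++ q ~r blockWord (y, true) L := by
  intro hrot
  rcases h with @⟨x, _, lo, h⟩ | @⟨m, hm, as, -⟩
  · have hlo : (lo + 1000) ^ 2 ≤ 5000 ^ 2 := Nat.pow_le_pow_left (by linarith [h.le]) 2
    obtain ⟨L', hL', hlen', hp⟩ := exists_window_of_isRotated (N := 1)
      (fun B hB ↦ length_block_le_of_mem_chainBlocks hB) hrot (by
        rw [List.length_replicate]
        lia)
    obtain ⟨B, rfl⟩ := List.length_eq_one_iff.1 hlen'
    obtain ⟨k, -, rfl⟩ := mem_chainBlocks.1 (show B ∈ chainBlocks x lo by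
      simpa using hL'.subset (List.mem_singleton_self B))
    have hx := List.eq_of_mem_replicate (hp.subset (a := (x, true)) (by simp [block]))
    have hy := List.eq_of_mem_replicate (hp.subset (a := (y, true)) (by simp [block]))
    exact h.ne (Prod.ext_iff.1 (hx.trans hy.symm)).1
  · rcases mem_blockWord ((hrot.mem_iff (a := (f, true))).1 (by simp; lia)) with hfb | ⟨B, hB, hfB⟩
    · cases hf <;> simp at hfb
    · obtain ⟨a, ha⟩ := exists_elt_of_mem_symbolBlocks hB hfB
      cases hf <;> simp at ha

end BlockRelator

/-- The markers of the relators of `G(𝒜)`: long powers of `f₁` or `f₂`, and markers of blocks. -/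
inductive IsMarker (S : IndexedStructure) (p₁ p₂ : ℕ) : List (GenSym S.A × Bool) → Prop
  | power {f : GenSym S.A} {p K : ℕ} (h : PowerRelator p₁ p₂ f p) (hK : 10 ^ 8 ≤ K) :
      IsMarker S p₁ p₂ (.replicate K (f, true))
  | block {y : GenSym S.A} {L : List (List (GenSym S.A × Bool) × ℕ)}
      {B : List (GenSym S.A × Bool) × ℕ} {z : GenSym S.A × Bool} (h : BlockRelator S y L)
      (hB : B ∈ L) (hgood : y = .b → B.2 % 100 ≠ 1) (hz : z ≠ (y, true)) :
      IsMarker S p₁ p₂ (marker (y, true) B z)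

lemma PowerRelator.exponent_unique {A : Type} {f : GenSym A} {p p' : ℕ}
    (h : PowerRelator p₁ p₂ f p) (h' : PowerRelator p₁ p₂ f p') : p = p' := by
  cases h <;> cases h' <;> rfl

lemma PowerRelator.le {A : Type} {f : GenSym A} {p N : ℕ} (h : PowerRelator p₁ p₂ f p)
    (hp₁ : N ≤ p₁) (hp₂ : N ≤ p₂) : N ≤ p := by
  cases h <;> assumption

lemma eq_of_replicate_isRotated {f : GenSym S.A} {p K : ℕ} {c s : List (GenSym S.A × Bool)}
    (hf : PowerRelator p₁ p₂ f p) (hK : 10 ^ 8 ≤ K) (hc : c ∈ relatorWords S p₁ p₂)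
    (h : List.replicate K (f, true) ++ s ~r c) :
    List.replicate K (f, true) ++ s = .replicate p (f, true) := by
  rcases hc with ⟨f', p', hf', rfl⟩ | ⟨y, L, hL, rfl⟩
  · have hmem : (f, true) ∈ List.replicate p' (f', true) := h.mem_iff.1 (by simp; lia)
    obtain rfl : f = f' := by simpa using List.eq_of_mem_replicate hmem
    rw [List.perm_replicate.1 h.perm, hf.exponent_unique hf']
  · exact absurd h (hL.not_replicate_isRotated hf hK)

lemma exists_eq_append_of_marker_isRotated {y : GenSym S.A}
    {L : List (List (GenSym S.A × Bool) × ℕ)} {B : List (GenSym S.A × Bool) × ℕ}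
    {z : GenSym S.A × Bool} {c s : List (GenSym S.A × Bool)} (hL : BlockRelator S y L) (hB : B ∈ L)
    (hgood : y = .b → B.2 % 100 ≠ 1) (hz : z ≠ (y, true)) (hc : c ∈ relatorWords S p₁ p₂)
    (h : marker (y, true) B z ++ s ~r c) :
    ∃ L₁ L₂, L = L₁ ++ B :: L₂ ∧ z :: (s ++ [(y, true)]) = blockWord (y, true) (L₂ ++ L₁) := by
  rcases hc with ⟨f, p, -, rfl⟩ | ⟨y', L', hL', rfl⟩
  · have hy : (y, true) = (f, true) := List.eq_of_mem_replicate (h.mem_iff.1 (by simp [marker]))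
    have hz' : z = (f, true) := List.eq_of_mem_replicate (h.mem_iff.1 (by simp [marker]))
    exact absurd (hz'.trans hy.symm) hz
  · exact (hL.eq_of_marker_isRotated hL' hB hgood hz h).2

lemma IsMarker.eq_of_isRotated {M c c' s s' : List (GenSym S.A × Bool)}
    (hM : IsMarker S p₁ p₂ M) (hc : c ∈ relatorWords S p₁ p₂) (hc' : c' ∈ relatorWords S p₁ p₂)
    (h : M ++ s ~r c) (h' : M ++ s' ~r c') : s = s' := by
  rcases hM with ⟨hf, hK⟩ | @⟨y, L, B, z, hL, hB, hgood, hz⟩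
  · exact List.append_cancel_left ((eq_of_replicate_isRotated hf hK hc h).trans
      (eq_of_replicate_isRotated hf hK hc' h').symm)
  · obtain ⟨L₁, L₂, rfl, hs⟩ := exists_eq_append_of_marker_isRotated hL hB hgood hz hc h
    obtain ⟨L₁', L₂', heq, hs'⟩ := exists_eq_append_of_marker_isRotated hL hB hgood hz hc' h'
    have hB' : B ∉ L₁ ∧ B ∉ L₂ := by simpa using (List.nodup_middle.1 hL.nodup).notMem
    obtain ⟨rfl, -, rfl⟩ := (List.append_cons_inj_of_notMem hB'.1 hB'.2).1 heq
    simpa using hs.trans hs'.symm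

lemma exists_isMarker_infix (hp₁ : 10 ^ 9 ≤ p₁) (hp₂ : 10 ^ 9 ≤ p₂)
    {c p q : List (GenSym S.A × Bool)} (hc : c ∈ relatorWords S p₁ p₂) (h : p ++ q ~r c)
    (hlen : (p ++ q).length ≤ 8 * p.length) : ∃ M, IsMarker S p₁ p₂ M ∧ M <:+: p := by
  rcases hc with ⟨f, n, hf, rfl⟩ | ⟨y, L, hL, rfl⟩
  · have heq := List.perm_replicate.1 h.perm
    rw [heq, List.length_replicate] at hlen
    have hn := hf.le hp₁ hp₂
    obtain ⟨hp, -⟩ : p = .replicate p.length (f, true) ∧ _ := (List.append_eq_replicate_iff.1 heq).2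
    exact ⟨p, hp ▸ .power hf (by lia), List.infix_rfl⟩
  · obtain ⟨B, hB, hgood, z, hz, hM⟩ := hL.exists_marker h hlen
    exact ⟨_, .block hL hB hgood hz, hM⟩

lemma exists_elt_of_false_mem_relatorWords {c : List (GenSym S.A × Bool)} {g : GenSym S.A}
    (hc : c ∈ relatorWords S p₁ p₂) (hg : (g, false) ∈ c) : ∃ a, g = .elt a := by
  rcases hc with ⟨f, n, -, rfl⟩ | ⟨y, L, hL, rfl⟩
  · simp at hg
  · exact hL.exists_elt_of_false_mem hg

lemma IsMarker.exists_mem {M : List (GenSym S.A × Bool)} (hM : IsMarker S p₁ p₂ M) :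
    ∃ l ∈ M, ∀ c ∈ relatorWords S p₁ p₂, (l.1, !l.2) ∉ c := by
  obtain ⟨g, hg, hgM⟩ : ∃ g : GenSym S.A, (∀ a, g ≠ .elt a) ∧ (g, true) ∈ M := by
    rcases hM with @⟨f, p, K, hf, hK⟩ | @⟨y, L, B, z, hL, -, -, -⟩
    · exact ⟨f, by cases hf <;> simp, List.mem_replicate.2 ⟨by lia, rfl⟩⟩
    · exact ⟨y, hL.ne_elt, List.mem_cons_self⟩
  refine ⟨_, hgM, fun c hc hgc ↦ ?_⟩
  obtain ⟨a, ha⟩ := exists_elt_of_false_mem_relatorWords hc hgc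
  exact hg a ha

lemma isMarkerSystem_relatorWords (hp₁ : 10 ^ 9 ≤ p₁) (hp₂ : 10 ^ 9 ≤ p₂) :
    IsMarkerSystem (relatorWords S p₁ p₂) (IsMarker S p₁ p₂) where
  exists_infix _ hc _ _ := exists_isMarker_infix hp₁ hp₂ hc
  eq_of_isRotated _ hc _ hc' _ _ _ hM := hM.eq_of_isRotated hc hc'
  exists_mem _ := IsMarker.exists_mem

lemma isCyclicallyReduced_of_mem_relatorWords {c : List (GenSym S.A × Bool)}
    (hc : c ∈ relatorWords S p₁ p₂) : IsCyclicallyReduced c := by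
  rcases hc with ⟨f, p, -, rfl⟩ | ⟨y, L, hL, rfl⟩
  · refine ⟨isReduced_replicate, fun l hl l' hl' _ ↦ ?_⟩
    rw [List.eq_of_mem_replicate (List.mem_of_mem_getLast? hl),
      List.eq_of_mem_replicate (List.mem_of_mem_head? hl')]
  · exact IsReducedBlock.isCyclicallyReduced_blockWord fun B ↦ hL.isReducedBlock

lemma BlockRelator.ne_nil {y : GenSym S.A} {L : List (List (GenSym S.A × Bool) × ℕ)}
    (h : BlockRelator S y L) : L ≠ [] := by
  rintro rfl
  generalize hL : ([] : List (List (GenSym S.A × Bool) × ℕ)) = L at h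
  rcases h with - | @⟨m, hm, as, h⟩
  · simp [chainBlocks] at hL
  · simpa [← hL] using countP_symbolBlocks (m := m) (X := eltWord as) (X' := closingWord S m as)

lemma ne_nil_of_mem_relatorWords (hp₁ : p₁ ≠ 0) (hp₂ : p₂ ≠ 0) {c : List (GenSym S.A × Bool)}
    (hc : c ∈ relatorWords S p₁ p₂) : c ≠ [] := by
  rcases hc with ⟨f, p, hf, rfl⟩ | ⟨y, L, hL, rfl⟩
  · cases hf <;> simpa
  · obtain ⟨B, L', rfl⟩ := List.exists_cons_of_ne_nil hL.ne_nil
    simp [blockWord, block, (hL.isBlock B List.mem_cons_self).ne_nil]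

theorem isSmallCancellation_relatorWords (hp₁ : 10 ^ 9 ≤ p₁) (hp₂ : 10 ^ 9 ≤ p₂) :
    IsSmallCancellation (symmetrization (relatorWords S p₁ p₂)) :=
  (isMarkerSystem_relatorWords hp₁ hp₂).isSmallCancellation
    (fun _ ↦ isCyclicallyReduced_of_mem_relatorWords)
    fun _ ↦ ne_nil_of_mem_relatorWords (by lia) (by lia)

lemma mk_blockWord_chainBlocks {A : Type} {x y : GenSym A} {lo : ℕ} :
    mk (blockWord (y, true) (chainBlocks x lo)) = chainProd lo (of x) (of y) := by
  rw [mk_blockWord, chainBlocks, List.map_map]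
  rfl

lemma mk_eltWord {A : Type} {n : ℕ} (as : Fin n → A) :
    mk (eltWord as) = (List.ofFn fun i ↦ of (GenSym.elt (as i))).prod := by
  rw [← MonoidHom.id_apply (FreeGroup _) (mk _), ← lift_of_eq_id, lift_mk, eltWord, List.map_ofFn]
  rfl

lemma mk_blockWord_symbolBlocks {α : Type*} {y : α × Bool} {m : ℕ} {X X' : List (α × Bool)} :
    mk (blockWord y (symbolBlocks m X X')) =
      ((List.range 98).map fun k ↦ mk X * mk [y] ^ (100 * m + 2 + k)).prod *
        (mk X * mk [y] ^ (100 * m + 100) * (mk X' * mk [y] ^ (100 * m + 1))) := by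
  rw [mk_blockWord, symbolBlocks, List.map_append, List.prod_append, List.map_map]
  refine congrArg₂ (· * ·) rfl ?_
  split_ifs with hX'
  · subst hX'
    have hexp : 100 * m + 100 + (100 * m + 1) = 200 * m + 101 := by lia
    rw [← one_eq_mk, one_mul, mul_assoc, ← pow_add, hexp, List.map_singleton, List.prod_singleton]
  · simp

lemma prod_map_range_add_two {M : Type*} [Monoid M] {N : ℕ} {f : ℕ → M} :
    ((List.range (N + 2)).map f).prod =
      f 0 * ((List.range N).map fun k ↦ f (k + 1)).prod * f (N + 1) := by
  rw [List.prod_range_succ, List.prod_range_succ']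

lemma wProd_eq_mul {G : Type*} [Group G] {m n : ℕ} {xs : Fin n → G} {y : G} :
    wProd m xs y = (List.ofFn xs).prod * y ^ (100 * m + 1) *
      ((List.range 98).map fun k ↦ (List.ofFn xs).prod * y ^ (100 * m + 2 + k)).prod *
        ((List.ofFn xs).prod * y ^ (100 * m + 100)) := by
  have hexp (k : ℕ) : 100 * m + (k + 1) + 1 = 100 * m + 2 + k := by lia
  rw [wProd, prod_map_range_add_two (N := 98)]
  refine congrArg₂ (· * ·) (congrArg₂ (· * ·) rfl (congrArg List.prod ?_)) rfl
  exact List.map_congr_left fun k _ ↦ by rw [hexp]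

open Classical in
/-- The relator of the `m`-th symbol for the arguments `as`. -/
noncomputable def symbolRelator (S : IndexedStructure) (m : ℕ) (as : Fin (S.arity m) → S.A) :
    FreeGroup (GenSym S.A) :=
  wProd m (fun i ↦ of (.elt (as i))) (of .b) *
    if S.isFunc m then (of (.elt (S.funcInterp m as)))⁻¹ else 1

open Classical in
lemma mk_closingWord {m : ℕ} {as : Fin (S.arity m) → S.A} :
    mk (closingWord S m as) =
      (if S.isFunc m then (of (.elt (S.funcInterp m as)))⁻¹ else 1) * mk (eltWord as) := by
  unfold closingWord
  split_ifs
  · exact reduce.self.trans (mul_mk (L₁ := [(_, false)])).symm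
  · rw [one_mul]

lemma isConj_symbolRelator {m : ℕ} {as : Fin (S.arity m) → S.A} :
    IsConj (symbolRelator S m as)
      (mk (blockWord (.b, true) (symbolBlocks m (eltWord as) (closingWord S m as)))) := by
  refine (isConj_iff.2 ⟨mk (eltWord as) * mk [(.b, true)] ^ (100 * m + 1), ?_⟩).symm
  rw [mk_blockWord_symbolBlocks, mk_closingWord, symbolRelator, wProd_eq_mul, ← mk_eltWord]
  simp only [of]
  group

lemma mem_grpRels_iff {r : FreeGroup (GenSym S.A)} :
    r ∈ grpRels S p₁ p₂ ↔ (∃ f p, PowerRelator p₁ p₂ f p ∧ r = of f ^ p) ∨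
      (∃ x y lo, ChainRelator x y lo ∧ r = chainProd lo (of x) (of y)) ∨
      ∃ m, 1 ≤ m ∧ ∃ as, (S.isFunc m ∨ S.relInterp m as) ∧ r = symbolRelator S m as := by
  constructor
  · rintro (((h | ⟨a, h | h⟩) | ⟨m, hm, hf, as, h⟩) | ⟨m, hm, hf, as, hrel, h⟩)
    · rcases h with h | h | h | h | h | h | h | h | h | h
      exacts [.inl ⟨_, _, .f1, h⟩, .inl ⟨_, _, .f2, h⟩, .inr <| .inl ⟨_, _, _, .f1_f2, h⟩,
        .inr <| .inl ⟨_, _, _, .f2_f1, h⟩, .inr <| .inl ⟨_, _, _, .b_f1, h⟩,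
        .inr <| .inl ⟨_, _, _, .b_f2, h⟩, .inr <| .inl ⟨_, _, _, .c_f1, h⟩,
        .inr <| .inl ⟨_, _, _, .c_f2, h⟩, .inr <| .inl ⟨_, _, _, .d_f1, h⟩,
        .inr <| .inl ⟨_, _, _, .d_f2, h⟩]
    · exact .inr <| .inl ⟨_, _, _, .elt_c a, h⟩
    · exact .inr <| .inl ⟨_, _, _, .elt_d a, h⟩
    · exact .inr <| .inr ⟨m, hm, as, .inl hf, by rw [h, symbolRelator, if_pos hf]⟩
    · exact .inr <| .inr ⟨m, hm, as, .inr hrel, by rw [h, symbolRelator, if_neg hf, mul_one]⟩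
  · rintro (⟨f, p, h, hr⟩ | ⟨x, y, lo, h, hr⟩ | ⟨m, hm, as, h, hr⟩) <;> rw [hr]
    · cases h <;> simp only [grpRels, Set.mem_union, Set.mem_insert_iff, true_or, or_true]
    · cases h with
      | elt_c a => exact .inl <| .inl <| .inr ⟨a, .inl rfl⟩
      | elt_d a => exact .inl <| .inl <| .inr ⟨a, .inr rfl⟩
      | _ => simp only [grpRels, Set.mem_union, Set.mem_insert_iff, Set.mem_singleton_iff, true_or,
          or_true]
    · by_cases hf : S.isFunc m
      · exact .inl <| .inr ⟨m, hm, hf, as, by rw [symbolRelator, if_pos hf]⟩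
      · exact .inr ⟨m, hm, hf, as, h.resolve_left hf, by rw [symbolRelator, if_neg hf, mul_one]⟩

lemma normalClosure_relatorWords :
    Subgroup.normalClosure (mk '' symmetrization (relatorWords S p₁ p₂)) =
      Subgroup.normalClosure (grpRels S p₁ p₂) := by
  rw [normalClosure_symmetrization]
  apply le_antisymm <;> refine normalClosure_le_of_isConj fun r hr ↦ ?_
  · obtain ⟨c, hc, hr⟩ := hr
    rw [← hr]
    obtain ⟨f, p, h, hc⟩ | ⟨y, L, h | ⟨hm, as, h⟩, hc⟩ := hc <;> rw [hc]
    · exact ⟨_, mem_grpRels_iff.2 (.inl ⟨f, p, h, rfl⟩), .inl (by rw [mk_replicate]; rfl)⟩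
    · exact ⟨_, mem_grpRels_iff.2 (.inr (.inl ⟨_, _, _, h, rfl⟩)),
        .inl (by rw [mk_blockWord_chainBlocks])⟩
    · exact ⟨_, mem_grpRels_iff.2 (.inr (.inr ⟨_, hm, as, h, rfl⟩)), .inl isConj_symbolRelator.symm⟩
  · obtain ⟨f, p, h, hr⟩ | ⟨x, y, lo, h, hr⟩ | ⟨m, hm, as, h, hr⟩ := mem_grpRels_iff.1 hr <;>
      rw [hr]
    · exact ⟨_, ⟨_, .inl ⟨f, p, h, rfl⟩, rfl⟩, .inl (by rw [mk_replicate]; rfl)⟩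
    · exact ⟨_, ⟨_, .inr ⟨y, _, .chain h, rfl⟩, rfl⟩, .inl (by rw [mk_blockWord_chainBlocks])⟩
    · exact ⟨_, ⟨_, .inr ⟨_, _, .symbol hm as h, rfl⟩, rfl⟩, .inl isConj_symbolRelator⟩

lemma exists_mk_eq_pow_of_append_comm {a b c : List (GenSym S.A × Bool)} (ha : a ≠ [])
    (hb : b ≠ []) (hc : c ∈ relatorWords S p₁ p₂) (hrot : a ++ b ~r c) (hcomm : a ++ b = b ++ a) :
    ∃ f p n, PowerRelator p₁ p₂ f p ∧ mk a = of f ^ n := by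
  rcases hc with ⟨f, p, hf, rfl⟩ | ⟨y, L, hL, rfl⟩
  · obtain ⟨-, hrep, -⟩ := List.append_eq_replicate_iff.1 (List.perm_replicate.1 hrot.perm)
    exact ⟨f, p, a.length, hf, by rw [of, ← mk_replicate, ← hrep]⟩
  · exact ((eq_nil_of_append_comm hL.isBlock hL.nodup hrot hcomm).elim ha hb).elim

lemma exists_mk_eq_zpow_of_append_comm {a b : List (GenSym S.A × Bool)} (ha : a ≠ [])
    (hb : b ≠ []) (hab : a ++ b ∈ symmetrization (relatorWords S p₁ p₂))
    (hcomm : a ++ b = b ++ a) :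
    ∃ f p, ∃ n : ℤ, PowerRelator p₁ p₂ f p ∧ mk a = of f ^ n := by
  obtain ⟨c, hc, hrot | hrot⟩ := hab
  · obtain ⟨f, p, n, hf, hn⟩ := exists_mk_eq_pow_of_append_comm ha hb hc hrot hcomm
    exact ⟨f, p, n, hf, by rw [hn, zpow_natCast]⟩
  · have hcomm' : invRev a ++ invRev b = invRev b ++ invRev a := by
      rw [← invRev_append, ← invRev_append, hcomm]
    obtain ⟨f, p, n, hf, hn⟩ := exists_mk_eq_pow_of_append_comm (invRev_injective.ne ha)
      (invRev_injective.ne hb) hc (by rwa [hcomm', ← invRev_append]) hcomm'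
    exact ⟨f, p, -n, hf, by rw [zpow_neg, zpow_natCast, ← hn, ← inv_mk, inv_inv]⟩

theorem exists_eq_conj_zpow_of_isOfFinOrder (hp₁ : 10 ^ 9 ≤ p₁) (hp₂ : 10 ^ 9 ≤ p₂)
    {x : GA S p₁ p₂} (hx : IsOfFinOrder x) (hx1 : x ≠ 1) :
    ∃ f p g, ∃ n : ℤ, PowerRelator p₁ p₂ f p ∧ x = g * gen S p₁ p₂ f ^ n * g⁻¹ := by
  obtain ⟨k, hk, hxk⟩ := isOfFinOrder_iff_pow_eq_one.1 hx
  obtain ⟨a, b, ha, hb, hab, hcomm, hconj⟩ := exists_relator_append_comm_of_pow_eq_one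
    (isSmallCancellation_relatorWords hp₁ hp₂) (PresentedGroup.mk_surjective (grpRels S p₁ p₂))
    ((QuotientGroup.ker_mk' _).trans normalClosure_relatorWords.symm) hk.ne' hxk hx1
  obtain ⟨f, p, n, hf, hn⟩ := exists_mk_eq_zpow_of_append_comm ha hb hab hcomm
  obtain ⟨g, hg⟩ := isConj_iff.1 hconj.symm
  exact ⟨f, p, g, n, hf, by rw [← hg, hn, map_zpow]; rfl⟩

namespace PowerRelator

lemma gen_pow_eq_one {f : GenSym S.A} {p : ℕ} (h : PowerRelator p₁ p₂ f p) :
    gen S p₁ p₂ f ^ p = 1 :=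
  (map_pow ..).symm.trans
    (PresentedGroup.one_of_mem (mem_grpRels_iff.2 (.inl ⟨f, p, h, rfl⟩)))

lemma eq_or_coprime {A : Type} {f f' : GenSym A} {p p' : ℕ} (hp : p₁.Coprime p₂)
    (h : PowerRelator p₁ p₂ f p) (h' : PowerRelator p₁ p₂ f' p') : f = f' ∨ p.Coprime p' := by
  cases h <;> cases h'
  exacts [.inl rfl, .inr hp, .inr hp.symm, .inl rfl]

theorem exists_eq_conj_zpow {f : GenSym S.A} {p : ℕ} (h : PowerRelator p₁ p₂ f p)
    (hp : p₁.Coprime p₂) (hp₁ : 10 ^ 9 ≤ p₁) (hp₂ : 10 ^ 9 ≤ p₂) {x : GA S p₁ p₂} (hx1 : x ≠ 1)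
    (hx : x ^ p = 1) :
    ∃ (g : GA S p₁ p₂) (n : ℤ), ¬ (p : ℤ) ∣ n ∧ x = g * gen S p₁ p₂ f ^ n * g⁻¹ := by
  have hp0 : 0 < p := by linarith [h.le hp₁ hp₂]
  obtain ⟨f', p', g, n, h', hxg⟩ := exists_eq_conj_zpow_of_isOfFinOrder hp₁ hp₂
    (isOfFinOrder_iff_pow_eq_one.2 ⟨p, hp0, hx⟩) hx1
  have hx' : x ^ p' = 1 := by
    rw [hxg, conj_pow, ← zpow_natCast, zpow_comm, zpow_natCast, h'.gen_pow_eq_one, one_zpow]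
    simp
  obtain rfl : f = f' := (h.eq_or_coprime hp h').resolve_right fun hcop ↦ hx1 (by
    simpa [hcop.gcd_eq_one] using pow_gcd_eq_one.2 ⟨hx, hx'⟩)
  refine ⟨g, n, ?_, hxg⟩
  rintro ⟨m, rfl⟩
  exact hx1 (by rw [hxg, zpow_mul, zpow_natCast, h.gen_pow_eq_one, one_zpow, mul_one,
    mul_inv_cancel])

end PowerRelator

end Presentation

end SmallCancellation

theorem stmt_5_general (S : IndexedStructure) (p₁ p₂ : ℕ) (hcop : p₁.Coprime p₂)
    (hbig₁ : 10 ^ 9 ≤ p₁) (hbig₂ : 10 ^ 9 ≤ p₂) (x : GA S p₁ p₂) (hx : x ≠ 1) :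
    (x ^ p₁ = 1 → ∃ (g : GA S p₁ p₂) (n : ℤ), ¬ (p₁ : ℤ) ∣ n ∧
      x = g * gen S p₁ p₂ GenSym.f1 ^ n * g⁻¹) ∧
    (x ^ p₂ = 1 → ∃ (g : GA S p₁ p₂) (n : ℤ), ¬ (p₂ : ℤ) ∣ n ∧
      x = g * gen S p₁ p₂ GenSym.f2 ^ n * g⁻¹) :=
  ⟨SmallCancellation.PowerRelator.f1.exists_eq_conj_zpow hcop hbig₁ hbig₂ hx,
    SmallCancellation.PowerRelator.f2.exists_eq_conj_zpow hcop hbig₁ hbig₂ hx⟩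

/-- Lemma `torsion-implies-f`: fix `i = 1` or `i = 2`; if `x ∈ G(𝒜)`
satisfies `x^{p_i} = e` but `x ≠ e`, then `x` is a conjugate of `f_i^n` for some integer `n`
with `p_i ∤ n`. -/
theorem stmt_5 (S : IndexedStructure) (p₁ p₂ : ℕ)
    (hp₁ : p₁.Prime) (hp₂ : p₂.Prime) (hne : p₁ ≠ p₂)
    (hbig₁ : 10 ^ 10 < p₁) (hbig₂ : 10 ^ 10 < p₂)
    (x : GA S p₁ p₂) (hx : x ≠ 1) :
    (x ^ p₁ = 1 → ∃ (g : GA S p₁ p₂) (n : ℤ), ¬ (p₁ : ℤ) ∣ n ∧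
      x = g * gen S p₁ p₂ GenSym.f1 ^ n * g⁻¹) ∧
    (x ^ p₂ = 1 → ∃ (g : GA S p₁ p₂) (n : ℤ), ¬ (p₂ : ℤ) ∣ n ∧
      x = g * gen S p₁ p₂ GenSym.f2 ^ n * g⁻¹) :=
  stmt_5_general S p₁ p₂ ((Nat.coprime_primes hp₁ hp₂).2 hne) (by lia) (by lia) x hx
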